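/- arXiv:2111.14477 — 7 statements merged into one kernel-verified Lean document; each statement's English description precedes it below -/
import Mathlib

section
/- For every integer n ≥ 2, the U(n)-weighted Davenport constant satisfies D_{U(n)}(n) = Ω(n) + 1, where U(n) is the group of units of Z_n. -/
open scoped BigOperators

/-- `S` is an `A`-weighted zero-sum sequence in `ZMod n`. -/
def IsWZS {n : ℕ} (A : Set (ZMod n)) {l : ℕ} (S : Fin l → ZMod n) : Prop :=
  ∃ a : Fin l → ZMod n, (∀ i, a i ∈ A) ∧ ∑ i, a i * S i = 0

/-- `S` has a nonempty subsequence which is an `A`-weighted zero-sum sequence. -/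
def HasWZSSub {n : ℕ} (A : Set (ZMod n)) {l : ℕ} (S : Fin l → ZMod n) : Prop :=
  ∃ I : Finset (Fin l), I.Nonempty ∧ ∃ a : Fin l → ZMod n,
    (∀ i ∈ I, a i ∈ A) ∧ ∑ i ∈ I, a i * S i = 0

/-- The `A`-weighted Davenport constant of `ZMod n`: the least positive integer `k`
such that every sequence of `k` elements of `ZMod n` has a nonempty subsequence
which is an `A`-weighted zero-sum sequence. -/
noncomputable def DavW (n : ℕ) (A : Set (ZMod n)) : ℕ :=
  sInf {k | 0 < k ∧ ∀ S : Fin k → ZMod n, HasWZSSub A S}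

/-- An `A`-extremal sequence for the Davenport constant: a sequence of length
`D_A(n) - 1` with no nonempty `A`-weighted zero-sum subsequence. -/
def IsExtremal (n : ℕ) (A : Set (ZMod n)) {l : ℕ} (S : Fin l → ZMod n) : Prop :=
  l = DavW n A - 1 ∧ ¬ HasWZSSub A S

/-- The set of units of `ZMod n`, as a weight set. -/
def USet (n : ℕ) : Set (ZMod n) := {a | IsUnit a}

/-- `S(n)`: the units `a` of `ZMod n` with Jacobi symbol `(a/n) = 1`. -/
def JSet (n : ℕ) : Set (ZMod n) := {a | IsUnit a ∧ jacobiSym (a.val : ℤ) n = 1}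

/-- `L(n;p)`: the units `a` of `ZMod n` with `(a/n) = (a/p)`. -/
def LSet (n p : ℕ) : Set (ZMod n) :=
  {a | IsUnit a ∧ jacobiSym (a.val : ℤ) n = jacobiSym (a.val : ℤ) p}

/-- Two sequences are equivalent with respect to the weight set `A`. -/
def EquivWrt {n : ℕ} (A : Set (ZMod n)) {k : ℕ} (x y : Fin k → ZMod n) : Prop :=
  ∃ (a : Fin k → ZMod n) (c : (ZMod n)ˣ) (σ : Equiv.Perm (Fin k)),
    (∀ i, a i ∈ A) ∧ ∀ i, y (σ i) = (c : ZMod n) * (a i * x i)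

/-!
By the Chinese remainder theorem and the description of `ZMod (p ^ k)` up to units, each term of a
sequence in `ZMod n` has, for each prime `p ∣ n` with exact exponent `k`, a level `v ≤ k`: its
`p`-component is associated to `p ^ v`. Terms of level `k` vanish, and terms of a common level
`v < k` cancel in pairs under unit weights, so a subsequence is good as soon as each of the `Ω(n)`
pairs `(p, v)` with `v < k` is taken an even number of times. These are `Ω(n)` linear conditions
over `𝔽₂`, which `Ω(n) + 1` terms can satisfy nontrivially.

Conversely, if `n = p₁ ⋯ pᵣ`, then `1, p₁, p₁p₂, …, p₁ ⋯ pᵣ₋₁` has no unit-weighted zero-sum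
subsequence: modulo `p₁ ⋯ pⱼ` only the first chosen term survives, where `j` is its position.
-/

/-- The terms of `x` indexed by `I` form a unit-weighted zero-sum sequence. For `R = ZMod n` this
is the inner condition of `HasWZSSub (USet n) x`; weights are total functions, constrained only
on `I`. -/
def UnitZeroSumOn {ι R : Type*} [CommRing R] (x : ι → R) (I : Finset ι) : Prop :=
  ∃ a : ι → R, (∀ i ∈ I, IsUnit (a i)) ∧ ∑ i ∈ I, a i * x i = 0

namespace UnitZeroSumOn

variable {ι R : Type*} [CommRing R] {x : ι → R} {I : Finset ι}

lemma of_forall_eq_zero (h : ∀ i ∈ I, x i = 0) : UnitZeroSumOn x I :=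
  ⟨1, fun _ _ => isUnit_one, Finset.sum_eq_zero fun i hi => by rw [h i hi, mul_zero]⟩

lemma of_even_card_of_associated {b : R} (hI : Even I.card) (h : ∀ i ∈ I, Associated (x i) b) :
    UnitZeroSumOn x I := by
  classical
  obtain ⟨m, hm⟩ := hI
  obtain ⟨J, hJI, hJ⟩ := Finset.exists_subset_card_eq (s := I) (n := m) (by omega)
  choose! u hu using h
  let a (i : ι) : R := if i ∈ J then u i else -u i
  have sum_J : ∑ i ∈ J, a i * x i = m • b := by
    rw [← hJ]
    refine Finset.sum_eq_card_nsmul fun i hi => ?_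
    rw [show a i = u i from if_pos hi, mul_comm, hu i (hJI hi)]
  have sum_compl : ∑ i ∈ I \ J, a i * x i = m • -b := by
    rw [show m = (I \ J).card by rw [Finset.card_sdiff_of_subset hJI]; omega]
    refine Finset.sum_eq_card_nsmul fun i hi => ?_
    obtain ⟨hiI, hiJ⟩ := Finset.mem_sdiff.1 hi
    rw [show a i = -u i from if_neg hiJ, neg_mul, mul_comm, hu i hiI]
  refine ⟨a, fun i _ => ?_, ?_⟩
  · dsimp only [a]
    split_ifs
    exacts [(u i).isUnit, (u i).isUnit.neg]
  · rw [← Finset.sum_sdiff hJI, sum_J, sum_compl, smul_neg, neg_add_cancel]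

lemma of_fiberwise {κ : Type*} [DecidableEq κ] (f : ι → κ)
    (h : ∀ v, UnitZeroSumOn x {i ∈ I | f i = v}) : UnitZeroSumOn x I := by
  choose a unit_a sum_a using h
  refine ⟨fun i => a (f i) i, fun i hi => unit_a _ i (Finset.mem_filter.2 ⟨hi, rfl⟩), ?_⟩
  rw [← Finset.sum_fiberwise_of_maps_to fun _ => Finset.mem_image_of_mem f]
  refine Finset.sum_eq_zero fun v _ => (Finset.sum_congr rfl fun i hi => ?_).trans (sum_a v)
  simp only [(Finset.mem_filter.1 hi).2]

lemma of_forall_even_card_level {π : R} {k : ℕ} (hπ : π ^ k = 0) (level : ι → ℕ)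
    (hlevel : ∀ i ∈ I, Associated (x i) (π ^ level i))
    (heven : ∀ v < k, Even {i ∈ I | level i = v}.card) : UnitZeroSumOn x I := by
  refine of_fiberwise level fun v => ?_
  have hassoc : ∀ i ∈ {i ∈ I | level i = v}, Associated (x i) (π ^ v) := fun i hi => by
    obtain ⟨hiI, rfl⟩ := Finset.mem_filter.1 hi
    exact hlevel i hiI
  rcases lt_or_ge v k with hv | hv
  · exact of_even_card_of_associated (heven v hv) hassoc
  · refine of_forall_eq_zero fun i hi => ?_
    rw [← associated_zero_iff_eq_zero, ← pow_eq_zero_of_le hv hπ]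
    exact hassoc i hi

lemma pi {κ : Type*} {R : κ → Type*} [∀ c, CommRing (R c)] {x : ι → ∀ c, R c}
    (h : ∀ c, UnitZeroSumOn (fun i => x i c) I) : UnitZeroSumOn x I := by
  choose a unit_a sum_a using h
  refine ⟨fun i c => a c i, fun i hi => Pi.isUnit_iff.2 fun c => unit_a c i hi, ?_⟩
  ext c
  simpa only [Finset.sum_apply, Pi.mul_apply, Pi.zero_apply] using sum_a c

lemma map {R' : Type*} [CommRing R'] (h : UnitZeroSumOn x I) (f : R →+* R') :
    UnitZeroSumOn (fun i => f (x i)) I := by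
  obtain ⟨a, unit_a, sum_a⟩ := h
  refine ⟨fun i => f (a i), fun i hi => (unit_a i hi).map f, ?_⟩
  simpa only [map_sum, map_mul, map_zero] using congrArg f sum_a

end UnitZeroSumOn

lemma exists_nonempty_forall_even_card_filter {ι κ : Type*} [Fintype ι] [Fintype κ]
    (h : Fintype.card κ < Fintype.card ι) (P : κ → ι → Prop) [∀ c, DecidablePred (P c)] :
    ∃ I : Finset ι, I.Nonempty ∧ ∀ c, Even {i ∈ I | P c i}.card := by
  let indicator (i : ι) (c : κ) : ZMod 2 := if P c i then 1 else 0
  have dependent : ¬ LinearIndependent (ZMod 2) indicator := fun hli => by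
    have := hli.fintype_card_le_finrank
    rw [Module.finrank_fintype_fun_eq_card] at this
    omega
  obtain ⟨w, sum_w, i₀, hi₀⟩ := Fintype.not_linearIndependent_iff.1 dependent
  refine ⟨Finset.univ.filter (w · ≠ 0), ⟨i₀, by simpa using hi₀⟩, fun c => ?_⟩
  have w_eq (i : ι) : w i = if w i ≠ 0 then 1 else 0 :=
    (by decide : ∀ z : ZMod 2, z = if z ≠ 0 then 1 else 0) (w i)
  rw [← ZMod.natCast_eq_zero_iff_even]
  calc (({i ∈ Finset.univ.filter (w · ≠ 0) | P c i}.card : ℕ) : ZMod 2)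
      = ∑ i, if w i ≠ 0 then indicator i c else 0 := by
        rw [Finset.natCast_card_filter, Finset.sum_filter]
    _ = ∑ i, w i * indicator i c := Finset.sum_congr rfl fun i _ => by
        conv_rhs => rw [w_eq i, ite_mul, one_mul, zero_mul]
    _ = (∑ i, w i • indicator i) c := by
        simp only [Finset.sum_apply, Pi.smul_apply, smul_eq_mul]
    _ = 0 := congrFun sum_w c

lemma exists_nonempty_unitZeroSumOn_pi {ι κ : Type*} [Fintype ι] [Fintype κ] {R : κ → Type*}
    [∀ c, CommRing (R c)] (π : ∀ c, R c) (k : κ → ℕ) (hπ : ∀ c, π c ^ k c = 0)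
    (hassoc : ∀ c (y : R c), ∃ v, Associated y (π c ^ v)) (hcard : ∑ c, k c < Fintype.card ι)
    (x : ι → ∀ c, R c) : ∃ I : Finset ι, I.Nonempty ∧ UnitZeroSumOn x I := by
  choose level hlevel using fun c i => hassoc c (x i c)
  obtain ⟨I, hI, heven⟩ := exists_nonempty_forall_even_card_filter (κ := Σ c, Fin (k c))
    (by simpa using hcard) (fun cv i => level cv.1 i = cv.2)
  exact ⟨I, hI, .pi fun c => .of_forall_even_card_level (hπ c) (level c) (fun i _ => hlevel c i)
    fun v hv => heven ⟨c, v, hv⟩⟩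

lemma exists_associated_prime_pow {p : ℕ} (hp : p.Prime) (k : ℕ) (y : ZMod (p ^ k)) :
    ∃ v, Associated y ((p : ZMod (p ^ k)) ^ v) := by
  obtain ⟨d, hd, u, hu, rfl⟩ := y.eq_unit_mul_divisor
  obtain ⟨v, -, rfl⟩ := (Nat.dvd_prime_pow hp).1 hd
  exact ⟨v, by simpa using associated_unit_mul_left ((p : ZMod (p ^ k)) ^ v) u hu⟩

lemma sum_primeFactors_factorization (n : ℕ) :
    ∑ p ∈ n.primeFactors, n.factorization p = n.primeFactorsList.length := by
  rw [← ArithmeticFunction.cardFactors_apply, ArithmeticFunction.cardFactors_eq_sum_factorization,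
    Finsupp.sum, Nat.support_factorization]

lemma exists_nonempty_unitZeroSumOn_zmod {ι : Type*} [Fintype ι] {n : ℕ} (hn : n ≠ 0)
    (hcard : n.primeFactorsList.length < Fintype.card ι) (x : ι → ZMod n) :
    ∃ I : Finset ι, I.Nonempty ∧ UnitZeroSumOn x I := by
  let e := ZMod.equivPi n hn
  obtain ⟨I, hI, hzero⟩ := exists_nonempty_unitZeroSumOn_pi
    (fun p : n.primeFactors => ((p : ℕ) : ZMod (p ^ n.factorization p)))
    (fun p => n.factorization p) (fun p => by rw [← Nat.cast_pow, ZMod.natCast_self])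
    (fun p => exists_associated_prime_pow (Nat.prime_of_mem_primeFactors p.2) _)
    (by rwa [Finset.sum_coe_sort n.primeFactors n.factorization, sum_primeFactors_factorization])
    (fun i => e (x i))
  exact ⟨I, hI, by simpa using hzero.map e.symm.toRingHom⟩

lemma not_unitZeroSumOn_of_dvd_of_not_dvd {ι R : Type*} [LinearOrder ι] [CommRing R] {x d : ι → R}
    (hdvd : ∀ i j, i < j → d i ∣ x j) (hndvd : ∀ i, ¬ d i ∣ x i) {I : Finset ι}
    (hI : I.Nonempty) : ¬ UnitZeroSumOn x I := by
  rintro ⟨a, unit_a, sum_a⟩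
  let j := I.min' hI
  have hj : j ∈ I := I.min'_mem hI
  have dvd_rest : d j ∣ ∑ i ∈ I.erase j, a i * x i := Finset.dvd_sum fun i hi =>
    (hdvd j i (I.min'_lt_of_mem_erase_min' hI hi)).mul_left _
  rw [← Finset.add_sum_erase I _ hj] at sum_a
  have dvd_min : d j ∣ a j * x j := (dvd_add_left dvd_rest).1 (sum_a ▸ dvd_zero _)
  exact hndvd j ((unit_a j hj).dvd_mul_left.1 dvd_min)

lemma natCast_dvd_natCast_zmod_iff {n d : ℕ} (hd : d ∣ n) (m : ℕ) :
    (d : ZMod n) ∣ m ↔ d ∣ m := by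
  refine ⟨fun h => ?_, Nat.cast_dvd_cast⟩
  simpa [ZMod.natCast_eq_zero_iff] using map_dvd (ZMod.castHom hd (ZMod d)) h

lemma prod_take_dvd_prod_take {M : Type*} [CommMonoid M] (L : List M) {i j : ℕ} (hij : i ≤ j) :
    (L.take i).prod ∣ (L.take j).prod :=
  (List.take_prefix_take_left hij).sublist.prod_dvd_prod

lemma not_prod_take_succ_dvd_prod_take {M : Type*} [CommMonoidWithZero M] [IsCancelMulZero M]
    {L : List M} (hL : 0 ∉ L) {i : ℕ} (hi : i < L.length) (hunit : ¬ IsUnit L[i]) :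
    ¬ (L.take (i + 1)).prod ∣ (L.take i).prod := by
  have : Nontrivial M := ⟨⟨L[i], 0, ne_of_mem_of_not_mem (List.getElem_mem hi) hL⟩⟩
  have prod_ne_zero : (L.take i).prod ≠ 0 := List.prod_ne_zero fun h => hL (List.mem_of_mem_take h)
  rw [List.prod_take_succ _ _ hi]
  intro h
  have dvd_one : L[i] ∣ 1 := (mul_dvd_mul_iff_left prod_ne_zero).1 (by rwa [mul_one])
  exact hunit (isUnit_of_dvd_one dvd_one)

lemma hasWZSSub_uSet_iff {n l : ℕ} {S : Fin l → ZMod n} :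
    HasWZSSub (USet n) S ↔ ∃ I : Finset (Fin l), I.Nonempty ∧ UnitZeroSumOn S I :=
  Iff.rfl

lemma exists_not_hasWZSSub_uSet {n : ℕ} (hn : n ≠ 0) :
    ∃ S : Fin n.primeFactorsList.length → ZMod n, ¬ HasWZSSub (USet n) S := by
  let P (i : ℕ) : ℕ := (n.primeFactorsList.take i).prod
  let S (i : Fin n.primeFactorsList.length) : ZMod n := P i
  refine ⟨S, ?_⟩
  rw [hasWZSSub_uSet_iff]
  rintro ⟨I, hI, hzero⟩
  refine not_unitZeroSumOn_of_dvd_of_not_dvd (x := S) (d := fun i => P (i + 1))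
    (fun i j hij => ?_) (fun i => ?_) hI hzero
  · exact Nat.cast_dvd_cast (prod_take_dvd_prod_take _ hij)
  · have P_dvd : P (i + 1) ∣ n :=
      calc P (i + 1) ∣ P n.primeFactorsList.length := prod_take_dvd_prod_take _ i.2
        _ = n := by simp only [P, List.take_length, Nat.prod_primeFactorsList hn]
    rw [natCast_dvd_natCast_zmod_iff P_dvd]
    exact not_prod_take_succ_dvd_prod_take
      (fun h => Nat.not_prime_zero (Nat.prime_of_mem_primeFactorsList h)) i.2
      (Nat.prime_of_mem_primeFactorsList (List.getElem_mem i.2)).prime.not_isUnit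

lemma HasWZSSub.of_comp_injective {n k l : ℕ} {A : Set (ZMod n)} {S : Fin l → ZMod n}
    {f : Fin k → Fin l} (hf : Function.Injective f) (h : HasWZSSub A (S ∘ f)) : HasWZSSub A S := by
  obtain ⟨I, hI, a, ha, sum_a⟩ := h
  refine ⟨I.map ⟨f, hf⟩, hI.map, Function.extend f a 0, ?_, ?_⟩
  · simpa [hf.extend_apply] using ha
  · simpa [hf.extend_apply] using sum_a

lemma davW_eq_succ {n k : ℕ} {A : Set (ZMod n)}
    (hupper : ∀ S : Fin (k + 1) → ZMod n, HasWZSSub A S)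
    (hlower : ∃ S : Fin k → ZMod n, ¬ HasWZSSub A S) : DavW n A = k + 1 := by
  obtain ⟨S, hS⟩ := hlower
  refine IsLeast.csInf_eq ⟨⟨k.succ_pos, hupper⟩, fun l ⟨_, hl⟩ => ?_⟩
  by_contra! hlk
  exact hS ((hl _).of_comp_injective (Fin.castLE_injective (Nat.le_of_lt_succ hlk)))

/-- For every integer `n ≥ 2`, `D_{U(n)}(n) = Ω(n) + 1`. -/
theorem davenport_units (n : ℕ) (hn : 2 ≤ n) :
    DavW n (USet n) = (Nat.primeFactorsList n).length + 1 := by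
  have hn0 : n ≠ 0 := by omega
  have hupper (S : Fin (n.primeFactorsList.length + 1) → ZMod n) : HasWZSSub (USet n) S :=
    hasWZSSub_uSet_iff.2 (exists_nonempty_unitZeroSumOn_zmod hn0 (by simp) S)
  exact davW_eq_succ hupper (exists_not_hasWZSSub_uSet hn0)
end

section
/- Let n = m_1·m_2 with m_1, m_2 ≥ 2. Let A, A_1, A_2 be nonempty subsets of Z_n, Z_{m_1}, Z_{m_2} respectively, none of which contains 0, and suppose that for i = 1, 2 the image of A under the natural map f_i : Z_n → Z_{m_i} is contained in A_i. Then D_A(n) ≥ D_{A_1}(m_1) + D_{A_2}(m_2) − 1. -/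
/-!
Lift an extremal sequence over `ZMod m₁` to `ZMod n`, lift one over `ZMod m₂` and multiply it by
`m₁`, and concatenate. Modulo `m₁` the second block vanishes, so a weighted zero-sum subsequence
cannot meet the first block; and since `m₁ * x = 0` in `ZMod n` forces `x = 0` modulo `m₂`, it
cannot lie in the second block either. The concatenation, of length
`(D_{A₁}(m₁) - 1) + (D_{A₂}(m₂) - 1)`, is thus shorter than `D_A(n)`, because the infimum defining
`D_A(n)` is attained by the Erdős–Ginzburg–Ziv theorem.
-/

open scoped BigOperators

/-- The sequence `x` in a module has no nonempty `A`-weighted zero-sum subsequence. This is the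
negation of `HasWZSSub`, with an arbitrary index type in place of `Fin l` so that sequences can be
concatenated along `ι ⊕ κ`. -/
def IsWeightedZeroSumFree {R M ι : Type*} [Semiring R] [AddCommMonoid M] [Module R M]
    (A : Set R) (x : ι → M) : Prop :=
  ∀ I : Finset ι, I.Nonempty → ∀ a : ι → R, (∀ i ∈ I, a i ∈ A) → ∑ i ∈ I, a i • x i ≠ 0

namespace IsWeightedZeroSumFree

variable {R S M N P ι κ : Type*} [Semiring R] [Semiring S]
  [AddCommMonoid M] [Module R M] [AddCommMonoid N] [Module S N] [AddCommMonoid P] [Module R P]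
  {A : Set R} {B : Set S} {σ : R →+* S}

theorem comp_injective {x : ι → M} (hx : IsWeightedZeroSumFree A x) {e : κ → ι}
    (he : Function.Injective e) : IsWeightedZeroSumFree A (x ∘ e) := by
  classical
  intro J hJ a ha hsum
  refine hx (J.image e) (hJ.image e) (Function.extend e a 0) ?_ ?_
  · simpa [he.extend_apply] using ha
  · simpa [Finset.sum_image he.injOn, he.extend_apply] using hsum

theorem comp_of_ker_le (f : M →ₛₗ[σ] N) (g : M →ₗ[R] P) (hσ : Set.MapsTo σ A B)
    (hker : LinearMap.ker g ≤ LinearMap.ker f) {x : ι → M}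
    (hx : IsWeightedZeroSumFree B (f ∘ x)) : IsWeightedZeroSumFree A (g ∘ x) := by
  intro I hI a ha hsum
  have hg : g (∑ i ∈ I, a i • x i) = 0 := by simpa using hsum
  have hf : f (∑ i ∈ I, a i • x i) = 0 := hker hg
  exact hx I hI (σ ∘ a) (fun i hi => hσ (ha i hi)) (by simpa using hf)

theorem sumElim (f : M →ₛₗ[σ] N) (hσ : Set.MapsTo σ A B) {x : ι → M} {y : κ → M}
    (hx : IsWeightedZeroSumFree B (f ∘ x)) (hy : IsWeightedZeroSumFree A y)
    (hfy : ∀ j, f (y j) = 0) : IsWeightedZeroSumFree A (Sum.elim x y) := by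
  intro I hI a ha hsum
  rw [Finset.sum_sum_eq_sum_toLeft_add_sum_toRight] at hsum
  simp only [Sum.elim_inl, Sum.elim_inr] at hsum
  have hleft : I.toLeft = ∅ := by
    by_contra hne
    refine hx I.toLeft (Finset.nonempty_iff_ne_empty.2 hne) (fun i => σ (a (.inl i)))
      (fun i hi => hσ (ha _ (Finset.mem_toLeft.1 hi))) ?_
    simpa [hfy] using congrArg f hsum
  have hright : I.toRight.Nonempty := by
    rw [← Finset.toLeft_disjSum_toRight (u := I), hleft] at hI
    simpa using hI
  refine hy I.toRight hright (fun j => a (.inr j)) (fun j hj => ha _ (Finset.mem_toRight.1 hj)) ?_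
  simpa [hleft] using hsum

end IsWeightedZeroSumFree

theorem isWeightedZeroSumFree_iff_not_hasWZSSub {n l : ℕ} {A : Set (ZMod n)} {S : Fin l → ZMod n} :
    IsWeightedZeroSumFree A S ↔ ¬ HasWZSSub A S := by
  simp [IsWeightedZeroSumFree, HasWZSSub]

theorem exists_isExtremal (n : ℕ) (A : Set (ZMod n)) :
    ∃ (l : ℕ) (S : Fin l → ZMod n), IsExtremal n A S := by
  suffices ∃ S : Fin (DavW n A - 1) → ZMod n, ¬ HasWZSSub A S by
    obtain ⟨S, hS⟩ := this
    exact ⟨_, S, rfl, hS⟩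
  by_contra! h
  have hpos : 0 < DavW n A - 1 := by
    obtain ⟨_, ⟨i, _⟩, _⟩ := h 0
    exact i.pos
  have hle : DavW n A ≤ DavW n A - 1 := Nat.sInf_le ⟨hpos, h⟩
  lia

section DavenportConstant

variable {n : ℕ} {A : Set (ZMod n)}

theorem hasWZSSub_of_two_mul_sub_one_le [NeZero n] (hA : A.Nonempty) {l : ℕ}
    (hl : 2 * n - 1 ≤ l) (S : Fin l → ZMod n) : HasWZSSub A S := by
  obtain ⟨a, ha⟩ := hA
  obtain ⟨I, -, hcard, hsum⟩ := ZMod.erdos_ginzburg_ziv (s := Finset.univ) S (by simpa using hl)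
  have hI : I.Nonempty := Finset.card_pos.1 (hcard ▸ NeZero.pos n)
  exact ⟨I, hI, fun _ => a, fun _ _ => ha, by rw [← Finset.mul_sum, hsum, mul_zero]⟩

theorem hasWZSSub_davW [NeZero n] (hA : A.Nonempty) (S : Fin (DavW n A) → ZMod n) :
    HasWZSSub A S := by
  have hpos : 0 < 2 * n - 1 := by have := NeZero.pos n; lia
  have hne : {k | 0 < k ∧ ∀ S : Fin k → ZMod n, HasWZSSub A S}.Nonempty :=
    ⟨2 * n - 1, hpos, hasWZSSub_of_two_mul_sub_one_le hA le_rfl⟩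
  exact (Nat.sInf_mem hne).2 S

theorem IsWeightedZeroSumFree.card_lt_davW [NeZero n] (hA : A.Nonempty) {ι : Type*} [Fintype ι]
    {x : ι → ZMod n} (hx : IsWeightedZeroSumFree A x) : Fintype.card ι < DavW n A := by
  by_contra! hle
  obtain ⟨e⟩ : Nonempty (Fin (DavW n A) ↪ ι) :=
    Function.Embedding.nonempty_of_card_le (by simpa using hle)
  exact isWeightedZeroSumFree_iff_not_hasWZSSub.1 (hx.comp_injective e.injective)
    (hasWZSSub_davW hA _)

end DavenportConstant

theorem castHom_eq_zero_of_natCast_mul_eq_zero {m k : ℕ} (hm : m ≠ 0) {x : ZMod (m * k)}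
    (hx : (m : ZMod (m * k)) * x = 0) : ZMod.castHom (dvd_mul_left k m) (ZMod k) x = 0 := by
  obtain ⟨t, rfl⟩ := ZMod.intCast_surjective x
  have hdvd : (m * k : ℤ) ∣ m * t := by
    rw [← Nat.cast_mul, ← ZMod.intCast_zmod_eq_zero_iff_dvd]
    exact_mod_cast hx
  rw [map_intCast, ZMod.intCast_zmod_eq_zero_iff_dvd]
  exact Int.dvd_of_mul_dvd_mul_left (by exact_mod_cast hm) hdvd

theorem exists_isWeightedZeroSumFree_sum {m₁ m₂ : ℕ} (hm₁ : m₁ ≠ 0)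
    {A : Set (ZMod (m₁ * m₂))} {A₁ : Set (ZMod m₁)} {A₂ : Set (ZMod m₂)}
    (hf₁ : Set.MapsTo (ZMod.castHom (dvd_mul_right m₁ m₂) (ZMod m₁)) A A₁)
    (hf₂ : Set.MapsTo (ZMod.castHom (dvd_mul_left m₂ m₁) (ZMod m₂)) A A₂)
    {ι κ : Type*} {x : ι → ZMod m₁} {y : κ → ZMod m₂}
    (hx : IsWeightedZeroSumFree A₁ x) (hy : IsWeightedZeroSumFree A₂ y) :
    ∃ z : ι ⊕ κ → ZMod (m₁ * m₂), IsWeightedZeroSumFree A z := by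
  let f₁ := (ZMod.castHom (dvd_mul_right m₁ m₂) (ZMod m₁)).toSemilinearMap
  let f₂ := (ZMod.castHom (dvd_mul_left m₂ m₁) (ZMod m₂)).toSemilinearMap
  let g := LinearMap.mulLeft (ZMod (m₁ * m₂)) (m₁ : ZMod (m₁ * m₂))
  obtain ⟨x, rfl⟩ := (ZMod.castHom_surjective (dvd_mul_right m₁ m₂)).comp_left x
  obtain ⟨y, rfl⟩ := (ZMod.castHom_surjective (dvd_mul_left m₂ m₁)).comp_left y
  have hker : LinearMap.ker g ≤ LinearMap.ker f₂ := fun _ hu =>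
    castHom_eq_zero_of_natCast_mul_eq_zero hm₁ hu
  have hgy : IsWeightedZeroSumFree A (g ∘ y) := .comp_of_ker_le f₂ g hf₂ hker hy
  have hf₁g : ∀ j, f₁ (g (y j)) = 0 := fun j => by
    change ZMod.castHom (dvd_mul_right m₁ m₂) (ZMod m₁) (m₁ * y j) = 0
    rw [map_mul, map_natCast, ZMod.natCast_self, zero_mul]
  exact ⟨Sum.elim x (g ∘ y), .sumElim f₁ hf₁ hx hgy hf₁g⟩

/-- lower bound for the Davenport constant from the two factors. -/
theorem davenport_lower_bound (n m₁ m₂ : ℕ) (hm₁ : 2 ≤ m₁) (hm₂ : 2 ≤ m₂)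
    (hn : n = m₁ * m₂)
    (A : Set (ZMod n)) (A₁ : Set (ZMod m₁)) (A₂ : Set (ZMod m₂))
    (hA : A.Nonempty) (hA₁ : A₁.Nonempty) (hA₂ : A₂.Nonempty)
    (h0 : (0 : ZMod n) ∉ A) (h01 : (0 : ZMod m₁) ∉ A₁) (h02 : (0 : ZMod m₂) ∉ A₂)
    (hf₁ : ∀ a ∈ A, ZMod.castHom (show m₁ ∣ n from ⟨m₂, hn⟩) (ZMod m₁) a ∈ A₁)
    (hf₂ : ∀ a ∈ A,
      ZMod.castHom (show m₂ ∣ n from ⟨m₁, by rw [hn, Nat.mul_comm]⟩) (ZMod m₂) a ∈ A₂) :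
    DavW m₁ A₁ + DavW m₂ A₂ - 1 ≤ DavW n A := by
  subst hn
  have : NeZero (m₁ * m₂) := ⟨by positivity⟩
  obtain ⟨_, S₁, rfl, hS₁⟩ := exists_isExtremal m₁ A₁
  obtain ⟨_, S₂, rfl, hS₂⟩ := exists_isExtremal m₂ A₂
  obtain ⟨T, hT⟩ := exists_isWeightedZeroSumFree_sum (by lia) hf₁ hf₂
    (isWeightedZeroSumFree_iff_not_hasWZSSub.2 hS₁) (isWeightedZeroSumFree_iff_not_hasWZSSub.2 hS₂)
  have hcard : (DavW m₁ A₁ - 1) + (DavW m₂ A₂ - 1) < DavW (m₁ * m₂) A := by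
    simpa using hT.card_lt_davW hA
  lia
end

section
/- Let n ≥ 3 be odd. If n is a perfect square then S(n) = U(n); otherwise S(n) is a subgroup of index 2 in U(n). -/
lemma jacobi_val_mul {n : ℕ} (m : ℕ) (hm : m ∣ n) (a b : ZMod n) :
    jacobiSym (((a * b).val : ℕ) : ℤ) m
      = jacobiSym ((a.val : ℕ) : ℤ) m * jacobiSym ((b.val : ℕ) : ℤ) m := by
  rw [ZMod.val_mul, ← jacobiSym.mul_left]
  apply jacobiSym.mod_left'
  push_cast
  rw [Int.emod_emod_of_dvd _ (Int.natCast_dvd_natCast.mpr hm)]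

lemma jacobi_val_one {n : ℕ} (m : ℕ) (hm : m ∣ n) :
    jacobiSym (((1 : ZMod n).val : ℕ) : ℤ) m = 1 := by
  rw [ZMod.val_one_eq_one_mod]
  have : jacobiSym (((1 % n : ℕ) : ℤ)) m = jacobiSym 1 m := by
    apply jacobiSym.mod_left'
    push_cast
    rw [Int.emod_emod_of_dvd _ (Int.natCast_dvd_natCast.mpr hm)]
  rw [this, jacobiSym.one_left]

/-- `S(n)` as a subgroup of `U(n)`: the kernel of `a ↦ (a/n)` (Jacobi symbol). -/
def SGroup (n : ℕ) : Subgroup (ZMod n)ˣ where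
  carrier := {a | jacobiSym (((a : ZMod n).val : ℕ) : ℤ) n = 1}
  one_mem' := jacobi_val_one n dvd_rfl
  mul_mem' := by
    intro a b ha hb
    simp only [Set.mem_setOf_eq, Units.val_mul] at *
    rw [jacobi_val_mul n dvd_rfl, ha, hb, mul_one]
  inv_mem' := by
    intro a ha
    simp only [Set.mem_setOf_eq] at *
    have h1 : jacobiSym ((((a : ZMod n) * ((a⁻¹ : (ZMod n)ˣ) : ZMod n)).val : ℕ) : ℤ) n = 1 := by
      rw [Units.mul_inv]; exact jacobi_val_one n dvd_rfl
    rw [jacobi_val_mul n dvd_rfl, ha, one_mul] at h1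
    exact h1

/-- `L(n;p)` as a subgroup of `U(n)`: the units `a` with `(a/n) = (a/p)`. -/
def LGroup (n p : ℕ) (hp : p ∣ n) : Subgroup (ZMod n)ˣ where
  carrier := {a | jacobiSym (((a : ZMod n).val : ℕ) : ℤ) n
                = jacobiSym (((a : ZMod n).val : ℕ) : ℤ) p}
  one_mem' := by
    simp only [Set.mem_setOf_eq, Units.val_one]
    rw [jacobi_val_one n dvd_rfl, jacobi_val_one p hp]
  mul_mem' := by
    intro a b ha hb
    simp only [Set.mem_setOf_eq, Units.val_mul] at *
    rw [jacobi_val_mul n dvd_rfl, jacobi_val_mul p hp, ha, hb]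
  inv_mem' := by
    intro a ha
    simp only [Set.mem_setOf_eq] at *
    have h1 : jacobiSym ((((a : ZMod n) * ((a⁻¹ : (ZMod n)ˣ) : ZMod n)).val : ℕ) : ℤ) n = 1 := by
      rw [Units.mul_inv]; exact jacobi_val_one n dvd_rfl
    have h2 : jacobiSym ((((a : ZMod n) * ((a⁻¹ : (ZMod n)ˣ) : ZMod n)).val : ℕ) : ℤ) p = 1 := by
      rw [Units.mul_inv]; exact jacobi_val_one p hp
    rw [jacobi_val_mul n dvd_rfl] at h1
    rw [jacobi_val_mul p hp] at h2
    rcases Int.eq_one_or_neg_one_of_mul_eq_one' h1 with ⟨hx, hy⟩ | ⟨hx, hy⟩ <;>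
      rcases Int.eq_one_or_neg_one_of_mul_eq_one' h2 with ⟨hx2, hy2⟩ | ⟨hx2, hy2⟩ <;>
        simp_all

/-!
If `n = m ^ 2` then `(a/n) = (a/m) ^ 2 = 1` for every unit `a`. If `n` is not a square, then some
prime `p` divides `n` to an odd power `p ^ k`; an `x` that is a nonresidue mod `p` and `1` mod
`n / p ^ k` has `(x/n) = (x/p) ^ k = -1`, so the Jacobi symbol takes both values `±1` on `U(n)` and
its kernel has index `2`.
-/

open scoped NumberTheorySymbols

section JacobiSymbol

theorem jacobiSym_eq_one_of_isSquare {a : ℤ} {n : ℕ} (hn : IsSquare n) (ha : a.gcd n = 1) :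
    J(a | n) = 1 := by
  obtain ⟨m, rfl⟩ := (isSquare_iff_exists_sq n).mp hn
  have ham : a.gcd m = 1 := by
    rw [← Int.isCoprime_iff_gcd_eq_one] at ha ⊢
    push_cast at ha
    exact (IsCoprime.pow_right_iff two_pos).mp ha
  rw [jacobiSym.pow_right, jacobiSym.sq_one ham]

theorem exists_odd_factorization_of_not_isSquare {n : ℕ} (hn : ¬IsSquare n) :
    ∃ p, Odd (n.factorization p) := by
  by_contra! h_even
  have hn0 : n ≠ 0 := by
    rintro rfl
    exact hn IsSquare.zero
  refine hn ?_
  rw [← Nat.prod_factorization_pow_eq_self hn0]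
  exact Finset.isSquare_prod _ fun p _ => (Nat.not_odd_iff_even.mp (h_even p)).isSquare_pow p

theorem exists_jacobiSym_prime_eq_neg_one {p : ℕ} (hp : p.Prime) (hp2 : p ≠ 2) :
    ∃ r : ℕ, J(r | p) = -1 := by
  have : Fact p.Prime := ⟨hp⟩
  obtain ⟨r, hr⟩ := FiniteField.exists_nonsquare (F := ZMod p) (by rwa [ZMod.ringChar_zmod_n])
  refine ⟨r.val, ZMod.nonsquare_iff_jacobiSym_eq_neg_one.mpr ?_⟩
  rwa [Int.cast_natCast, ZMod.natCast_zmod_val]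

theorem jacobiSym_natCast_congr {a b n : ℕ} (h : a ≡ b [MOD n]) : J(a | n) = J(b | n) :=
  jacobiSym.mod_left' (Int.natCast_modEq_iff.mpr h)

theorem exists_jacobiSym_eq_neg_one_of_odd_factorization {n p : ℕ} (hp2 : p ≠ 2)
    (hk : Odd (n.factorization p)) : ∃ x : ℕ, J(x | n) = -1 := by
  have hp : p.Prime := Nat.prime_of_mem_primeFactors (Finsupp.mem_support_iff.mpr hk.pos.ne')
  have hn : n ≠ 0 := by
    rintro rfl
    simp at hk
  set k := n.factorization p
  set m := n / p ^ k
  have hm : m ≠ 0 := (Nat.ordCompl_pos p hn).ne'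
  obtain ⟨r, hr⟩ := exists_jacobiSym_prime_eq_neg_one hp hp2
  obtain ⟨x, hxp, hxm⟩ := Nat.chineseRemainder (Nat.coprime_ordCompl hp hn) r 1
  have hx_one : J(x | m) = 1 := by
    rw [jacobiSym_natCast_congr hxm, Nat.cast_one, jacobiSym.one_left]
  refine ⟨x, ?_⟩
  calc J(x | n) = J(x | p ^ k * m) := by rw [Nat.ordProj_mul_ordCompl_eq_self n p]
    _ = J(x | p) ^ k * J(x | m) := by
      rw [jacobiSym.mul_right' _ (pow_ne_zero k hp.ne_zero) hm, jacobiSym.pow_right]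
    _ = (-1) ^ k := by rw [jacobiSym_natCast_congr hxp, hr, hx_one, mul_one]
    _ = -1 := hk.neg_one_pow

theorem exists_jacobiSym_eq_neg_one {n : ℕ} (hodd : Odd n) (hn : ¬IsSquare n) :
    ∃ x : ℕ, J(x | n) = -1 := by
  obtain ⟨p, hk⟩ := exists_odd_factorization_of_not_isSquare hn
  refine exists_jacobiSym_eq_neg_one_of_odd_factorization ?_ hk
  rintro rfl
  rw [Nat.factorization_eq_zero_of_not_dvd hodd.not_two_dvd_nat] at hk
  exact Nat.not_odd_zero hk

end JacobiSymbol

section SGroup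

variable {n : ℕ}

theorem mem_sGroup {u : (ZMod n)ˣ} : u ∈ SGroup n ↔ J((u : ZMod n).val | n) = 1 :=
  Iff.rfl

theorem gcd_val_unit_eq_one (u : (ZMod n)ˣ) : Int.gcd (u : ZMod n).val n = 1 := by
  rw [Int.gcd_natCast_natCast]
  exact ZMod.val_coe_unit_coprime u

theorem jacobiSym_val_natCast (x : ℕ) : J((x : ZMod n).val | n) = J(x | n) := by
  rw [ZMod.val_natCast]
  exact jacobiSym_natCast_congr (Nat.mod_modEq x n)

theorem exists_unit_jacobiSym_eq_neg_one {x : ℕ} (hx : J(x | n) = -1) :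
    ∃ u : (ZMod n)ˣ, J((u : ZMod n).val | n) = -1 := by
  have hn : n ≠ 0 := by
    rintro rfl
    simp at hx
  have hcop : x.Coprime n := by
    by_contra h
    have : J(x | n) = 0 := jacobiSym.eq_zero_iff.mpr ⟨hn, by rwa [Int.gcd_natCast_natCast]⟩
    omega
  refine ⟨ZMod.unitOfCoprime x hcop, ?_⟩
  rw [ZMod.coe_unitOfCoprime, jacobiSym_val_natCast, hx]

theorem sGroup_eq_top_of_isSquare (hn : IsSquare n) : SGroup n = ⊤ :=
  (Subgroup.eq_top_iff' _).mpr fun u => jacobiSym_eq_one_of_isSquare hn (gcd_val_unit_eq_one u)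

theorem sGroup_index_eq_two_of_jacobiSym_eq_neg_one {u : (ZMod n)ˣ}
    (hu : J((u : ZMod n).val | n) = -1) : (SGroup n).index = 2 := by
  refine Subgroup.index_eq_two_iff_exists_notMem_and.mpr ⟨u, ?_, fun v => ?_⟩
  · rw [mem_sGroup, hu]
    decide
  · rw [mem_sGroup, mem_sGroup, Units.val_mul, jacobi_val_mul n dvd_rfl, hu]
    rcases jacobiSym.eq_one_or_neg_one (gcd_val_unit_eq_one v) with hv | hv
    · exact Or.inr hv
    · exact Or.inl (by rw [hv]; norm_num)

end SGroup

/-- if `n` is a square then `S(n) = U(n)`; otherwise `S(n)` has index 2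
in `U(n)`. -/
theorem sgroup_top_or_index_two (n : ℕ) (hn : 3 ≤ n) (hodd : Odd n) :
    (IsSquare n → SGroup n = ⊤) ∧ (¬ IsSquare n → (SGroup n).index = 2) := by
  refine ⟨sGroup_eq_top_of_isSquare, fun hsq => ?_⟩
  obtain ⟨x, hx⟩ := exists_jacobiSym_eq_neg_one hodd hsq
  obtain ⟨u, hu⟩ := exists_unit_jacobiSym_eq_neg_one hx
  exact sGroup_index_eq_two_of_jacobiSym_eq_neg_one hu
end

section
/- Let S be a sequence in Z_n, let d be a proper divisor of n which divides every term of S, let n' = n/d, and suppose gcd(d, n') = 1. Let f : Z_n → Z_{n'} be the natural map and let S' be the image of S under f. Let A ⊆ Z_n and A' ⊆ Z_{n'} with A' ⊆ f(A). If S' is an A'-weighted zero-sum sequence in Z_{n'}, then S is an A-weighted zero-sum sequence in Z_n. -/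
open scoped BigOperators

/-!
The sum `∑ a i * S i` of a lift of the weights lies in the ideal generated by `d` and is mapped
to `0` in `ZMod m`. So it is enough that a multiple of `d` vanishes in `ZMod n` as soon as it
vanishes in `ZMod m`, and this holds whenever `n` divides `lcm d m`. For `m = n / d` coprime to `d`
the least common multiple is `d * (n / d) = n`.
-/

theorem exists_weights_sum_mul_eq_zero_of_disjoint_ker {R R' ι : Type*} [Semiring R] [Semiring R']
    [Fintype ι] {f : R →+* R'} {I : Ideal R} (hI : Disjoint I (RingHom.ker f)) {S : ι → R}
    (hS : ∀ i, S i ∈ I) {A : Set R} {A' : Set R'} (hA' : A' ⊆ f '' A)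
    (h : ∃ a' : ι → R', (∀ i, a' i ∈ A') ∧ ∑ i, a' i * f (S i) = 0) :
    ∃ a : ι → R, (∀ i, a i ∈ A) ∧ ∑ i, a i * S i = 0 := by
  obtain ⟨a', ha', hsum⟩ := h
  choose a ha hfa using fun i => hA' (ha' i)
  have sum_mem_ideal : ∑ i, a i * S i ∈ I := sum_mem fun i _ => I.mul_mem_left (a i) (hS i)
  have map_sum_eq_zero : f (∑ i, a i * S i) = 0 := by
    simpa only [map_sum, map_mul, hfa] using hsum
  exact ⟨a, ha, Submodule.disjoint_def.mp hI _ sum_mem_ideal map_sum_eq_zero⟩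

theorem disjoint_span_natCast_ker_castHom {n m d : ℕ} (hm : m ∣ n) (hn : n ∣ d.lcm m) :
    Disjoint (Ideal.span {(d : ZMod n)}) (RingHom.ker (ZMod.castHom hm (ZMod m))) := by
  refine Submodule.disjoint_def.mpr fun x hx hfx => ?_
  obtain ⟨y, rfl⟩ := Ideal.mem_span_singleton.mp hx
  obtain ⟨k, rfl⟩ := ZMod.intCast_surjective y
  have m_dvd : (m : ℤ) ∣ d * k := by
    rw [← ZMod.intCast_zmod_eq_zero_iff_dvd]
    simpa only [RingHom.mem_ker, map_mul, map_natCast, map_intCast, Int.cast_mul,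
      Int.cast_natCast] using hfx
  have n_dvd : (n : ℤ) ∣ d * k :=
    (Int.natCast_dvd_natCast.mpr hn).trans (Int.coe_lcm_dvd (dvd_mul_right _ _) m_dvd)
  exact_mod_cast (ZMod.intCast_zmod_eq_zero_iff_dvd (d * k) n).mpr n_dvd

theorem lift_zero_sum_general {n m d : ℕ} (hm : m ∣ n) (hn : n ∣ d.lcm m) {l : ℕ}
    {S : Fin l → ZMod n} (hdiv : ∀ i, (d : ZMod n) ∣ S i) {A : Set (ZMod n)} {A' : Set (ZMod m)}
    (hA' : A' ⊆ ZMod.castHom hm (ZMod m) '' A)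
    (h : IsWZS A' fun i => ZMod.castHom hm (ZMod m) (S i)) :
    IsWZS A S :=
  exists_weights_sum_mul_eq_zero_of_disjoint_ker (disjoint_span_natCast_ker_castHom hm hn)
    (fun i => Ideal.mem_span_singleton.mpr (hdiv i)) hA' h

/-- lifting a weighted zero-sum along division by a coprime divisor. -/
theorem lift_zero_sum (n d : ℕ) (hn : 2 ≤ n) (hd : d ∣ n) (hdn : d ≠ n)
    (hcop : Nat.Coprime d (n / d))
    {l : ℕ} (S : Fin l → ZMod n)
    (hdiv : ∀ i, (d : ZMod n) ∣ S i)
    (A : Set (ZMod n)) (A' : Set (ZMod (n / d)))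
    (hA' : A' ⊆ (ZMod.castHom (Nat.div_dvd_of_dvd hd) (ZMod (n / d))) '' A)
    (h : IsWZS A' fun i => ZMod.castHom (Nat.div_dvd_of_dvd hd) (ZMod (n / d)) (S i)) :
    IsWZS A S := by
  have hn_lcm : n ∣ d.lcm (n / d) := by rw [hcop.lcm_eq_mul, Nat.mul_div_cancel' hd]
  exact lift_zero_sum_general (Nat.div_dvd_of_dvd hd) hn_lcm hdiv hA' h
end

section
/- Let n = p^r where p ≥ 7 is a prime and r ≥ 1, and let A = U(n)² = {x² : x ∈ U(n)}. If S is a sequence in Z_n such that at least three terms of S are units of Z_n, then S is an A-weighted zero-sum sequence. -/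
open scoped BigOperators

/-!
Over a field `K` with at least seven elements and `2 ≠ 0`, the conic `a x² + b y² = e`, `e ≠ 0`, has
a point off the axes as soon as it has a point: rotate the given point by the parameter `t`, and
observe that at most six values of `t` are excluded. If `K` is finite then the conic does have a
point, so a form `a x² + b y² + c z²` takes every value `d` at nonzero arguments, by first choosing
`z` with `c z² ≠ d`. In a Henselian local ring such a representation over the residue field lifts,
since a unit is a square when its residue is; thus three unit terms of a sequence can absorb
whatever the remaining terms, taken with weight `1`, contribute.
-/

open Polynomial IsLocalRing Cardinal

lemma quadratic_ne_zero_of_leading_or_middle_ne_zero {R : Type*} [Semiring R] {a b c : R}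
    (h : a ≠ 0 ∨ b ≠ 0) : C a * X ^ 2 + C b * X + C c ≠ 0 := by
  intro h0
  have hcoeff (n : ℕ) : (C a * X ^ 2 + C b * X + C c).coeff n = 0 := by rw [h0, coeff_zero]
  rcases h with ha | hb
  · exact ha (by simpa [coeff_X, coeff_C] using hcoeff 2)
  · exact hb (by simpa [coeff_X, coeff_C] using hcoeff 1)

section Domain

variable {R : Type*} [CommRing R] [IsDomain R]

lemma exists_eval_ne_zero_of_three_quadratics (hR : 7 ≤ #R) {f g h : R[X]}
    (hf : f ≠ 0) (hg : g ≠ 0) (hh : h ≠ 0)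
    (hf2 : f.natDegree ≤ 2) (hg2 : g.natDegree ≤ 2) (hh2 : h.natDegree ≤ 2) :
    ∃ t, f.eval t ≠ 0 ∧ g.eval t ≠ 0 ∧ h.eval t ≠ 0 := by
  have hdeg : (f * g * h).natDegree < 7 :=
    (natDegree_mul_le_of_le (natDegree_mul_le_of_le hf2 hg2) hh2).trans_lt (by norm_num)
  obtain ⟨t, ht⟩ := exists_eval_ne_zero_of_natDegree_lt_card (f * g * h)
    (mul_ne_zero (mul_ne_zero hf hg) hh) (lt_of_lt_of_le (mod_cast hdeg) hR)
  rw [eval_mul, eval_mul, mul_ne_zero_iff, mul_ne_zero_iff, and_assoc] at ht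
  exact ⟨t, ht⟩

lemma exists_ne_zero_mul_sq_ne (hR : 4 ≤ #R) {c : R} (hc : c ≠ 0) (d : R) :
    ∃ z : R, z ≠ 0 ∧ c * z ^ 2 ≠ d := by
  have hne : C c * X ^ 2 + C 0 * X + C (-d) ≠ 0 :=
    quadratic_ne_zero_of_leading_or_middle_ne_zero (.inl hc)
  have hdeg : ((C c * X ^ 2 + C 0 * X + C (-d)) * X).natDegree < 4 :=
    (natDegree_mul_le_of_le natDegree_quadratic_le natDegree_X_le).trans_lt (by norm_num)
  obtain ⟨z, hz⟩ := exists_eval_ne_zero_of_natDegree_lt_card _ (mul_ne_zero hne X_ne_zero)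
    (lt_of_lt_of_le (mod_cast hdeg) hR)
  simp only [eval_add, eval_mul, eval_C, eval_pow, eval_X, zero_mul, add_zero, ← sub_eq_add_neg]
    at hz
  exact ⟨z, right_ne_zero_of_mul hz, sub_ne_zero.1 (left_ne_zero_of_mul hz)⟩

end Domain

section Field

variable {K : Type*} [Field K] {a b c : K}

/-- The new point is `x + y √(-b/a)` times the element `(1 + t √(-b/a)) / (1 - t √(-b/a))` of
norm `1`. -/
lemma mul_sq_add_mul_sq_rotation_eq {t : K} (ht : a + b * t ^ 2 ≠ 0) (x y : K) :
    a * (((a - b * t ^ 2) * x - 2 * b * t * y) / (a + b * t ^ 2)) ^ 2 +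
      b * (((a - b * t ^ 2) * y + 2 * a * t * x) / (a + b * t ^ 2)) ^ 2 =
      a * x ^ 2 + b * y ^ 2 := by
  field_simp
  ring

lemma exists_ne_zero_mul_sq_add_mul_sq_eq (hK : 7 ≤ #K) (h2 : (2 : K) ≠ 0) (ha : a ≠ 0) (hb : b ≠ 0)
    {x y : K} (hxy : a * x ^ 2 + b * y ^ 2 ≠ 0) :
    ∃ x' y' : K, x' ≠ 0 ∧ y' ≠ 0 ∧ a * x' ^ 2 + b * y' ^ 2 = a * x ^ 2 + b * y ^ 2 := by
  have hne : x ≠ 0 ∨ y ≠ 0 := by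
    by_contra! h
    simp [h] at hxy
  obtain ⟨t, hden, hnumx, hnumy⟩ := exists_eval_ne_zero_of_three_quadratics hK
    (quadratic_ne_zero_of_leading_or_middle_ne_zero (a := b) (b := 0) (c := a) (.inl hb))
    (quadratic_ne_zero_of_leading_or_middle_ne_zero (a := -b * x) (b := -2 * b * y) (c := a * x)
      (by simpa [ha, hb, h2] using hne))
    (quadratic_ne_zero_of_leading_or_middle_ne_zero (a := -b * y) (b := 2 * a * x) (c := a * y)
      (by simpa [ha, hb, h2] using hne.symm))
    natDegree_quadratic_le natDegree_quadratic_le natDegree_quadratic_le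
  simp only [eval_add, eval_mul, eval_C, eval_pow, eval_X] at hden hnumx hnumy
  have hden' : a + b * t ^ 2 ≠ 0 := by convert hden using 1; ring
  refine ⟨_, _, div_ne_zero ?_ hden', div_ne_zero ?_ hden', mul_sq_add_mul_sq_rotation_eq hden' x y⟩
  · convert hnumx using 1; ring
  · convert hnumy using 1; ring

lemma exists_mul_sq_add_mul_sq_eq [Finite K] (h2 : (2 : K) ≠ 0) (ha : a ≠ 0) (hb : b ≠ 0) (e : K) :
    ∃ x y : K, a * x ^ 2 + b * y ^ 2 = e := by
  have := Fintype.ofFinite K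
  have hchar : ringChar K ≠ 2 := fun h => h2 (mod_cast (ringChar.spec K 2).2 h.dvd)
  obtain ⟨x, y, h⟩ := FiniteField.exists_root_sum_quadratic
    (f := C a * X ^ 2 + C 0 * X + C (-e)) (g := C b * X ^ 2 + C 0 * X + C 0)
    (degree_quadratic ha) (degree_quadratic hb) (FiniteField.odd_card_of_char_ne_two hchar)
  simp only [eval_add, eval_mul, eval_C, eval_pow, eval_X] at h
  exact ⟨x, y, by linear_combination h⟩

lemma exists_ne_zero_mul_sq_add_mul_sq_add_mul_sq_eq [Finite K] (hK : 7 ≤ #K) (h2 : (2 : K) ≠ 0)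
    (ha : a ≠ 0) (hb : b ≠ 0) (hc : c ≠ 0) (d : K) :
    ∃ x y z : K, x ≠ 0 ∧ y ≠ 0 ∧ z ≠ 0 ∧ a * x ^ 2 + b * y ^ 2 + c * z ^ 2 = d := by
  obtain ⟨z, hz, hcz⟩ := exists_ne_zero_mul_sq_ne (le_trans (by norm_num) hK) hc d
  obtain ⟨x₀, y₀, h₀⟩ := exists_mul_sq_add_mul_sq_eq h2 ha hb (d - c * z ^ 2)
  obtain ⟨x, y, hx, hy, h⟩ := exists_ne_zero_mul_sq_add_mul_sq_eq hK h2 ha hb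
    (h₀.trans_ne (sub_ne_zero.2 hcz.symm))
  exact ⟨x, y, z, hx, hy, hz, by rw [h, h₀, sub_add_cancel]⟩

end Field

section Henselian

variable {R : Type*} [CommRing R]

lemma henselianLocalRing_of_krullDimLE_zero [IsLocalRing R] [Ring.KrullDimLE 0 R] :
    HenselianLocalRing R where
  is_henselian f _ a₀ hroot hsimple := by
    simp only [← Ring.KrullDimLE.isNilpotent_iff_mem_maximalIdeal] at hroot ⊢
    obtain ⟨a, ⟨hnil, ha⟩, -⟩ :=
      existsUnique_nilpotent_sub_and_aeval_eq_zero (P := f) (x := a₀) hroot hsimple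
    exact ⟨a, ha, by simpa using hnil.neg⟩

variable [HenselianLocalRing R]

lemma exists_isUnit_sq_eq_of_residue_eq_sq (h2 : IsUnit (2 : R)) {u : R} {t : ResidueField R}
    (ht : t ≠ 0) (hu : residue R u = t ^ 2) : ∃ x, IsUnit x ∧ x ^ 2 = u := by
  obtain ⟨t, rfl⟩ := residue_surjective t
  rw [residue_ne_zero_iff_isUnit] at ht
  obtain ⟨x, hx, hxt⟩ := HenselianLocalRing.is_henselian (X ^ 2 - C u)
    (monic_X_pow_sub_C u two_ne_zero) t
    ((residue_eq_zero_iff _).1 (by simp [hu])) (by simpa [one_add_one_eq_two] using h2.mul ht)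
  rw [← residue_eq_zero_iff, map_sub, sub_eq_zero] at hxt
  refine ⟨x, ?_, by simpa [sub_eq_zero] using hx⟩
  rwa [← residue_ne_zero_iff_isUnit, hxt, residue_ne_zero_iff_isUnit]

lemma exists_isUnit_mul_sq_add_mul_sq_add_mul_sq_eq [Finite (ResidueField R)]
    (hR : 7 ≤ #(ResidueField R)) (h2 : IsUnit (2 : R)) {a b c : R}
    (ha : IsUnit a) (hb : IsUnit b) (hc : IsUnit c) (d : R) :
    ∃ x y z : R, IsUnit x ∧ IsUnit y ∧ IsUnit z ∧ a * x ^ 2 + b * y ^ 2 + c * z ^ 2 = d := by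
  have h2' : (2 : ResidueField R) ≠ 0 := (h2.map (residue R)).ne_zero
  obtain ⟨x', y', z', hx', hy', hz', h⟩ := exists_ne_zero_mul_sq_add_mul_sq_add_mul_sq_eq hR h2'
    ((residue_ne_zero_iff_isUnit a).2 ha) ((residue_ne_zero_iff_isUnit b).2 hb)
    ((residue_ne_zero_iff_isUnit c).2 hc) (residue R d)
  obtain ⟨y, rfl⟩ := residue_surjective y'
  obtain ⟨z, rfl⟩ := residue_surjective z'
  obtain ⟨v, hv⟩ := ha.dvd (a := d - b * y ^ 2 - c * z ^ 2)
  have hres : residue R v = x' ^ 2 := by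
    refine mul_left_cancel₀ ((residue_ne_zero_iff_isUnit a).2 ha) ?_
    rw [← map_mul, ← hv]
    simp only [map_sub, map_mul, map_pow]
    linear_combination -h
  obtain ⟨x, hx, rfl⟩ := exists_isUnit_sq_eq_of_residue_eq_sq h2 hx' hres
  exact ⟨x, y, z, hx, (residue_ne_zero_iff_isUnit y).1 hy', (residue_ne_zero_iff_isUnit z).1 hz',
    by linear_combination -hv⟩

end Henselian

section PrimePower

lemma isUnit_two_zmod_of_odd {n : ℕ} (hn : Odd n) : IsUnit (2 : ZMod n) :=
  mod_cast (ZMod.isUnit_iff_coprime 2 n).2 hn.coprime_two_left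

variable (p r : ℕ) [Fact p.Prime] [NeZero r]

instance nontrivial_zmod_prime_pow : Nontrivial (ZMod (p ^ r)) :=
  ZMod.nontrivial_iff.2 (Nat.one_lt_pow (NeZero.ne r) (Fact.out : p.Prime).one_lt).ne'

instance isLocalRing_zmod_prime_pow : IsLocalRing (ZMod (p ^ r)) :=
  .of_surjective' (PadicInt.toZModPow r) (ZMod.ringHom_surjective _)

instance henselianLocalRing_zmod_prime_pow : HenselianLocalRing (ZMod (p ^ r)) :=
  henselianLocalRing_of_krullDimLE_zero

lemma prime_le_card_residueField_zmod_prime_pow : p ≤ #(ResidueField (ZMod (p ^ r))) := by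
  let φ := ResidueField.lift (ZMod.castHom (dvd_pow_self p (NeZero.ne r)) (ZMod p))
  simpa using mk_le_of_surjective (ZMod.ringHom_surjective φ)

end PrimePower

theorem squares_zero_sum_general {R : Type*} [CommRing R] [HenselianLocalRing R]
    [Finite (ResidueField R)] (hR : 7 ≤ #(ResidueField R)) (h2 : IsUnit (2 : R)) {ι : Type*}
    [Fintype ι] (S : ι → R) (h3 : 3 ≤ {i | IsUnit (S i)}.ncard) (d : R) :
    ∃ a : ι → R, (∀ i, IsUnit (a i)) ∧ ∑ i, a i ^ 2 * S i = d := by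
  classical
  obtain ⟨i, hi, j, hj, k, hk, hij, hik, hjk⟩ := (Set.two_lt_ncard (Set.toFinite _)).1 h3
  let T : Finset ι := {i, j, k}
  obtain ⟨x, y, z, hx, hy, hz, hxyz⟩ :=
    exists_isUnit_mul_sq_add_mul_sq_add_mul_sq_eq hR h2 hi hj hk (d - ∑ t ∈ Tᶜ, S t)
  let a : ι → R := fun t => if t = i then x else if t = j then y else if t = k then z else 1
  have hT : ∑ t ∈ T, a t ^ 2 * S t = S i * x ^ 2 + S j * y ^ 2 + S k * z ^ 2 := by
    rw [Finset.sum_insert (by simp [hij, hik]), Finset.sum_pair hjk]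
    simp only [a, if_true, hij.symm, hik.symm, hjk.symm, if_false]
    ring
  have hTc : ∑ t ∈ Tᶜ, a t ^ 2 * S t = ∑ t ∈ Tᶜ, S t :=
    Finset.sum_congr rfl fun t ht => by
      obtain ⟨hti, htj, htk⟩ : t ≠ i ∧ t ≠ j ∧ t ≠ k := by simpa [T] using ht
      simp [a, hti, htj, htk]
  refine ⟨a, fun t => ?_, ?_⟩
  · dsimp only [a]
    split_ifs <;> first | assumption | exact isUnit_one
  · rw [← Finset.sum_add_sum_compl T, hT, hTc, hxyz, sub_add_cancel]

/-- a sequence in `Z_{p^r}` (`p ≥ 7` prime) with at least three unit terms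
is a `U(n)²`-weighted zero-sum sequence. -/
theorem squares_zero_sum (p r : ℕ) (hp : p.Prime) (hp7 : 7 ≤ p) (hr : 1 ≤ r)
    {l : ℕ} (S : Fin l → ZMod (p ^ r))
    (h3 : 3 ≤ {i : Fin l | IsUnit (S i)}.ncard) :
    IsWZS {a : ZMod (p ^ r) | ∃ x : ZMod (p ^ r), IsUnit x ∧ a = x ^ 2} S := by
  have : Fact p.Prime := ⟨hp⟩
  have : NeZero r := ⟨by omega⟩
  obtain ⟨a, ha, hsum⟩ := squares_zero_sum_general
    ((Nat.cast_le.2 hp7).trans (prime_le_card_residueField_zmod_prime_pow p r))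
    (isUnit_two_zmod_of_odd (hp.odd_of_ne_two (by omega)).pow) S h3 0
  exact ⟨fun i => a i ^ 2, fun i => ⟨a i, ha i, rfl⟩, hsum⟩
end

section
/- Let n be odd and let A = S(n). If n is prime (i.e., Ω(n) = 1), then D_A(n) = 3. If n is squarefree, every prime divisor of n is at least 7, and Ω(n) ≥ 2, then D_A(n) = Ω(n) + 1. -/
/-!
For squarefree `n = ∏ pᵢ` the Chinese remainder theorem turns `ZMod n` into the product of the
fields `ZMod pᵢ`, and `S(n)` into the tuples whose quadratic characters multiply to `1`. The unit
vectors of the product show that `Ω(n)` terms need not contain a weighted zero-sum.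

Conversely, unit weights with sum zero can be chosen independently in each coordinate, as long as
no coordinate has exactly one nonzero term; deleting offending terms one by one achieves this for
more than `Ω(n)` terms. The sign condition is then repaired one coordinate at a time: a term that
vanishes in some coordinate may have its weight there changed freely, and scaling makes the weight
of one further term equal to `1`. If two terms vanish in no coordinate, then a third term is either
zero or nonzero in some coordinate. In the latter case, all signs can be prescribed in that
coordinate, because over a field with more than five elements `a x + b y + c z` takes every value
even when the quadratic characters of `a`, `b`, `c` are fixed.
-/

open scoped BigOperators

open scoped Finset

/-- `HasWZSSub` over an arbitrary ring and index type, so that weighted zero-sum sequences can be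
moved between `ZMod n` and a product of fields. -/
def HasWeightedZeroSum {R κ : Type*} [Semiring R] (A : Set R) (x : κ → R) : Prop :=
  ∃ I : Finset κ, I.Nonempty ∧ ∃ a : κ → R, (∀ k ∈ I, a k ∈ A) ∧ ∑ k ∈ I, a k * x k = 0

namespace HasWeightedZeroSum

variable {R κ κ' : Type*} [Semiring R] {A : Set R} {x : κ → R}

theorem of_eq_zero {a : R} (ha : a ∈ A) {k : κ} (hk : x k = 0) : HasWeightedZeroSum A x :=
  ⟨{k}, Finset.singleton_nonempty k, fun _ => a, fun _ _ => ha, by simp [hk]⟩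

theorem of_comp_injective {f : κ' → κ} (hf : f.Injective) (h : HasWeightedZeroSum A (x ∘ f)) :
    HasWeightedZeroSum A x := by
  obtain ⟨I, hI, a, ha, hsum⟩ := h
  refine ⟨I.map ⟨f, hf⟩, hI.map, Function.extend f a 0, ?_, ?_⟩
  · simpa [hf.extend_apply] using ha
  · simpa [hf.extend_apply] using hsum

theorem of_ringEquiv_comp {S : Type*} [Semiring S] (e : S ≃+* R) {y : κ → S}
    (h : HasWeightedZeroSum A (e ∘ y)) : HasWeightedZeroSum (e ⁻¹' A) y := by
  obtain ⟨I, hI, a, ha, hsum⟩ := h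
  refine ⟨I, hI, e.symm ∘ a, fun k hk => by simpa using ha k hk, e.injective ?_⟩
  simpa using hsum

theorem map_ringEquiv {S : Type*} [Semiring S] (e : S ≃+* R) {y : κ → S}
    (h : HasWeightedZeroSum (e ⁻¹' A) y) : HasWeightedZeroSum A (e ∘ y) := by
  obtain ⟨I, hI, a, ha, hsum⟩ := h
  exact ⟨I, hI, e ∘ a, ha, by simpa using congrArg e hsum⟩

end HasWeightedZeroSum

theorem hasWeightedZeroSum_iff_of_fintype {R κ : Type*} [Semiring R] [Fintype κ] {A : Set R}
    {x : κ → R} : HasWeightedZeroSum A x ↔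
      ∃ b : κ → R, (∀ k, b k = 0 ∨ b k ∈ A) ∧ (∃ k, b k ∈ A) ∧ ∑ k, b k * x k = 0 := by
  classical
  constructor
  · rintro ⟨I, ⟨k, hk⟩, a, ha, hsum⟩
    refine ⟨fun k => if k ∈ I then a k else 0, fun k => ?_, ⟨k, by simpa [hk] using ha k hk⟩, ?_⟩
    · by_cases hkI : k ∈ I
      · exact .inr (by simpa [hkI] using ha k hkI)
      · exact .inl (if_neg hkI)
    · simpa [ite_mul] using hsum
  · rintro ⟨b, hb, ⟨k, hk⟩, hsum⟩
    refine ⟨Finset.univ.filter (b · ∈ A), ⟨k, by simpa using hk⟩, b, by simp, ?_⟩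
    rw [Finset.sum_filter_of_ne, hsum]
    exact fun k _ hne => (hb k).resolve_left (left_ne_zero_of_mul hne)

theorem not_hasWeightedZeroSum_pi_single {ι : Type*} [DecidableEq ι] {R : ι → Type*}
    [∀ i, Semiring (R i)] {A : Set (∀ i, R i)} (hA : ∀ a ∈ A, ∀ i, a i ≠ 0) :
    ¬ HasWeightedZeroSum A fun i => Pi.single i (1 : R i) := by
  rintro ⟨I, ⟨i, hi⟩, a, ha, hsum⟩
  apply hA (a i) (ha i hi) i
  have hcoord := congrFun hsum i
  rw [Finset.sum_apply, Finset.sum_eq_single_of_mem i hi] at hcoord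
  · simpa using hcoord
  · intro j _ hji
    simp [hji.symm]

theorem davW_preimage_eq {n : ℕ} {R κ : Type*} [Semiring R] [Fintype κ] (e : ZMod n ≃+* R)
    {A : Set R} {x : κ → R} (hx : ¬ HasWeightedZeroSum A x)
    (hA : ∀ y : Fin (Fintype.card κ + 1) → R, HasWeightedZeroSum A y) :
    DavW n (e ⁻¹' A) = Fintype.card κ + 1 := by
  have hmem : Fintype.card κ + 1 ∈ {k | 0 < k ∧ ∀ y : Fin k → ZMod n, HasWZSSub (e ⁻¹' A) y} :=
    ⟨Nat.succ_pos _, fun y => (hA (e ∘ y)).of_ringEquiv_comp e⟩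
  refine le_antisymm (Nat.sInf_le hmem) (le_csInf ⟨_, hmem⟩ ?_)
  rintro k ⟨-, hk⟩
  by_contra! hlt
  obtain ⟨f⟩ : Nonempty (Fin k ↪ κ) :=
    Function.Embedding.nonempty_of_card_le (by rw [Fintype.card_fin]; omega)
  have hf : HasWeightedZeroSum (e ⁻¹' A) (e.symm ∘ x ∘ f) := hk _
  refine hx (.of_comp_injective f.injective ?_)
  simpa [Function.comp_def] using hf.map_ringEquiv e

theorem exists_subset_card_filter_ne_one {ι κ : Type*} (R : κ → ι → Prop)
    [∀ i, DecidablePred (R · i)] {P : Finset ι} {J : Finset κ} (hPJ : #P < #J) :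
    ∃ I ⊆ J, I.Nonempty ∧ (∀ i ∈ P, #{k ∈ I | R k i} ≠ 1) ∧
      (I = J ∨ ∃ i ∈ P, ∀ k ∈ I, ¬ R k i) := by
  classical
  induction P using Finset.strongInduction generalizing J with
  | H P ih =>
    by_cases hJ : ∀ i ∈ P, #{k ∈ J | R k i} ≠ 1
    · exact ⟨J, subset_rfl, Finset.card_pos.1 (by omega), hJ, .inl rfl⟩
    push Not at hJ
    obtain ⟨i, hi, hcard⟩ := hJ
    obtain ⟨k, hk⟩ := Finset.card_eq_one.1 hcard
    have hkJ : k ∈ J := (Finset.mem_filter.1 (hk ▸ Finset.mem_singleton_self k)).1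
    have hR : ∀ k' ∈ J.erase k, ¬ R k' i := fun k' hk' hRk' => Finset.ne_of_mem_erase hk' <|
      Finset.mem_singleton.1 (hk ▸ Finset.mem_filter.2 ⟨Finset.mem_of_mem_erase hk', hRk'⟩)
    obtain ⟨I, hIJ, hI, hne, -⟩ := ih (P.erase i) (Finset.erase_ssubset hi) (J := J.erase k) (by
      rw [Finset.card_erase_of_mem hi, Finset.card_erase_of_mem hkJ]
      have := Finset.card_pos.2 ⟨i, hi⟩
      omega)
    have hRI : ∀ k' ∈ I, ¬ R k' i := fun k' hk' => hR k' (hIJ hk')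
    refine ⟨I, hIJ.trans (Finset.erase_subset k J), hI, fun j hj => ?_, .inr ⟨i, hi, hRI⟩⟩
    rcases eq_or_ne j i with rfl | hji
    · simp [Finset.filter_eq_empty_iff.2 hRI]
    · exact hne j (Finset.mem_erase.2 ⟨hji, hj⟩)

theorem exists_sum_mul_eq_of_subset {R κ : Type*} [Ring R] {B : κ → Set R}
    (hB : ∀ k, (B k).Nonempty) {T I : Finset κ} (hTI : T ⊆ I) (y : κ → R)
    (hT : ∀ t, ∃ w : κ → R, (∀ k ∈ T, w k ∈ B k) ∧ ∑ k ∈ T, w k * y k = t) (t : R) :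
    ∃ w : κ → R, (∀ k, w k ∈ B k) ∧ ∑ k ∈ I, w k * y k = t := by
  classical
  choose b hb using hB
  obtain ⟨w, hw, hsum⟩ := hT (t - ∑ k ∈ I \ T, b k * y k)
  refine ⟨T.piecewise w b, fun k => ?_, ?_⟩
  · by_cases hk : k ∈ T
    · simpa [hk] using hw k hk
    · simpa [hk] using hb k
  · have hwT : ∑ k ∈ T, T.piecewise w b k * y k = ∑ k ∈ T, w k * y k :=
      Finset.sum_congr rfl fun k hk => by rw [Finset.piecewise_eq_of_mem _ _ _ hk]
    have hbT : ∑ k ∈ I \ T, T.piecewise w b k * y k = ∑ k ∈ I \ T, b k * y k :=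
      Finset.sum_congr rfl fun k hk => by
        rw [Finset.piecewise_eq_of_notMem _ _ _ (Finset.mem_sdiff.1 hk).2]
    rw [← Finset.sum_sdiff hTI, hwT, hbT, hsum, add_sub_cancel]

theorem nontrivial_units_of_ringChar_ne_two {R : Type*} [Ring R] [Nontrivial R]
    (hR : ringChar R ≠ 2) : Nontrivial Rˣ :=
  ⟨-1, 1, fun h => Ring.neg_one_ne_one_of_char_ne_two hR (by simpa using congrArg Units.val h)⟩

section Field

variable {F κ : Type*} [Field F]

theorem exists_ne_zero_mul_add_mul_eq [Nontrivial Fˣ] {x y : F} (hx : x ≠ 0) (hy : y ≠ 0)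
    (t : F) : ∃ a b : F, a ≠ 0 ∧ b ≠ 0 ∧ a * x + b * y = t := by
  obtain ⟨a, ha, hat⟩ : ∃ a : F, a ≠ 0 ∧ t - a * x ≠ 0 := by
    obtain ⟨u, hu⟩ := exists_ne (1 : Fˣ)
    by_cases h1 : t - 1 * x = 0
    · refine ⟨u, u.ne_zero, fun hu' => hu (Units.ext (mul_right_cancel₀ hx ?_))⟩
      push_cast
      linear_combination h1 - hu'
    · exact ⟨1, one_ne_zero, h1⟩
  exact ⟨a, (t - a * x) / y, ha, div_ne_zero hat hy, by field_simp; ring⟩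

theorem exists_ne_zero_sum_mul_eq_zero [Nontrivial Fˣ] [DecidableEq F] {I : Finset κ} {y : κ → F}
    (h : #{k ∈ I | y k ≠ 0} ≠ 1) :
    ∃ w : κ → F, (∀ k, w k ≠ 0) ∧ ∑ k ∈ I, w k * y k = 0 := by
  classical
  rcases Nat.lt_or_gt_of_ne h with hlt | hgt
  · rw [Nat.lt_one_iff, Finset.card_eq_zero, Finset.filter_eq_empty_iff] at hlt
    exact ⟨1, fun _ => one_ne_zero,
      Finset.sum_eq_zero fun k hk => by rw [not_not.1 (hlt hk), mul_zero]⟩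
  · obtain ⟨u, hu, v, hv, huv⟩ := Finset.one_lt_card.1 hgt
    rw [Finset.mem_filter] at hu hv
    have huvI : {u, v} ⊆ I := by simp [Finset.insert_subset_iff, hu.1, hv.1]
    refine exists_sum_mul_eq_of_subset (B := fun _ => {0}ᶜ) (fun _ => ⟨1, one_ne_zero⟩) huvI y
      (fun t => ?_) 0
    obtain ⟨a, b, ha, hb, hab⟩ := exists_ne_zero_mul_add_mul_eq hu.2 hv.2 t
    refine ⟨fun k => if k = u then a else b, fun k _ => ?_, ?_⟩
    · dsimp only
      split_ifs
      exacts [ha, hb]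
    · simpa [Finset.sum_pair huv, huv.symm] using hab

end Field

section FiniteField

open Polynomial

variable {F : Type*} [Field F] [Fintype F]

theorem exists_eval_ne_zero_of_natDegree_le {R : Type*} [CommRing R] [IsDomain R] [Fintype R]
    {f : R[X]} (hf : f ≠ 0) {d : ℕ} (hd : f.natDegree ≤ d) (hR : d < Fintype.card R) :
    ∃ r, f.eval r ≠ 0 :=
  f.exists_eval_ne_zero_of_natDegree_lt_card hf <| by
    rw [Cardinal.mk_fintype]
    exact_mod_cast hd.trans_lt hR

theorem exists_sq_mul_add_sq_mul_eq {F : Type*} [Field F] [Finite F] (hF : ringChar F ≠ 2)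
    {x y : F} (hx : x ≠ 0) (hy : y ≠ 0) (t : F) : ∃ u v : F, u ^ 2 * x + v ^ 2 * y = t := by
  have := Fintype.ofFinite F
  obtain ⟨u, v, huv⟩ := FiniteField.exists_root_sum_quadratic
    (f := C x * X ^ 2 + C 0 * X + C 0) (g := C y * X ^ 2 + C 0 * X + C (-t))
    (degree_quadratic hx) (degree_quadratic hy) (FiniteField.odd_card_of_char_ne_two hF)
  refine ⟨u, v, ?_⟩
  simp only [eval_add, eval_mul, eval_pow, eval_C, eval_X] at huv
  linear_combination huv

-- A line of slope `m` through the point `(-a, 0)` of the conic `u² x + v² y = a² x` meets it again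
-- off the axes, as soon as `m`, `x - y m²` and `x + y m²` are nonzero.
theorem exists_ne_zero_sq_mul_add_sq_mul_eq_sq_mul (hF : ringChar F ≠ 2)
    (hcard : 5 < Fintype.card F) {x y a : F} (hx : x ≠ 0) (ha : a ≠ 0) :
    ∃ u v : F, u ≠ 0 ∧ v ≠ 0 ∧ u ^ 2 * x + v ^ 2 * y = a ^ 2 * x := by
  have h2 : (2 : F) ≠ 0 := Ring.two_ne_zero hF
  obtain ⟨m, hm⟩ : ∃ m, eval m (X * ((C x - C y * X ^ 2) * (C x + C y * X ^ 2))) ≠ 0 := by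
    have hne (z : F) : C x + C z * X ^ 2 ≠ 0 := fun h => hx (by simpa using congrArg (eval 0) h)
    refine exists_eval_ne_zero_of_natDegree_le ?_ (by compute_degree) hcard
    exact mul_ne_zero X_ne_zero (mul_ne_zero (by simpa [sub_eq_add_neg] using hne (-y)) (hne y))
  simp only [eval_mul, eval_X, eval_add, eval_sub, eval_C, eval_pow, mul_ne_zero_iff] at hm
  obtain ⟨hm, hsub, hadd⟩ := hm
  refine ⟨a * (x - y * m ^ 2) / (x + y * m ^ 2), a * (2 * x * m) / (x + y * m ^ 2), ?_, ?_, ?_⟩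
  · exact div_ne_zero (mul_ne_zero ha hsub) hadd
  · exact div_ne_zero (mul_ne_zero ha (mul_ne_zero (mul_ne_zero h2 hx) hm)) hadd
  · field_simp
    ring

theorem exists_ne_zero_sq_mul_add_sq_mul_eq (hF : ringChar F ≠ 2) (hcard : 5 < Fintype.card F)
    {x y t : F} (hx : x ≠ 0) (hy : y ≠ 0) (ht : t ≠ 0) :
    ∃ u v : F, u ≠ 0 ∧ v ≠ 0 ∧ u ^ 2 * x + v ^ 2 * y = t := by
  obtain ⟨a, b, rfl⟩ := exists_sq_mul_add_sq_mul_eq hF hx hy t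
  rcases eq_or_ne b 0 with rfl | hb
  · have ha : a ≠ 0 := by rintro rfl; simp at ht
    simpa using exists_ne_zero_sq_mul_add_sq_mul_eq_sq_mul hF hcard hx ha
  rcases eq_or_ne a 0 with rfl | ha
  · obtain ⟨v, u, hv, hu, huv⟩ := exists_ne_zero_sq_mul_add_sq_mul_eq_sq_mul hF hcard hy hb
    exact ⟨u, v, hu, hv, by linear_combination huv⟩
  · exact ⟨a, b, ha, hb, rfl⟩

theorem exists_ne_zero_sq_mul_add_sq_mul_add_sq_mul_eq (hF : ringChar F ≠ 2)
    (hcard : 5 < Fintype.card F) {x y z : F} (hx : x ≠ 0) (hy : y ≠ 0) (hz : z ≠ 0) (t : F) :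
    ∃ u v w : F, u ≠ 0 ∧ v ≠ 0 ∧ w ≠ 0 ∧ u ^ 2 * x + v ^ 2 * y + w ^ 2 * z = t := by
  obtain ⟨w, hw⟩ : ∃ w, eval w (X * (C t - X ^ 2 * C z)) ≠ 0 := by
    have hne : C t - X ^ 2 * C z ≠ 0 := fun h => hz (by
      simpa [coeff_C] using congrArg (coeff · 2) h)
    exact exists_eval_ne_zero_of_natDegree_le (d := 3) (mul_ne_zero X_ne_zero hne)
      (by compute_degree) (by omega)
  simp only [eval_mul, eval_X, eval_sub, eval_C, eval_pow, mul_ne_zero_iff] at hw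
  obtain ⟨u, v, hu, hv, huv⟩ := exists_ne_zero_sq_mul_add_sq_mul_eq hF hcard hx hy hw.2
  exact ⟨u, v, w, hu, hv, hw.1, by rw [huv, sub_add_cancel]⟩

end FiniteField

section QuadraticChar

variable {F κ : Type*} [Field F] [Fintype F] [DecidableEq F]

theorem exists_quadraticChar_eq (hF : ringChar F ≠ 2) {e : ℤ} (he : IsUnit e) :
    ∃ a : F, quadraticChar F a = e := by
  rcases Int.isUnit_iff.1 he with rfl | rfl
  · exact ⟨1, map_one _⟩
  · exact quadraticChar_exists_neg_one hF

theorem isUnit_quadraticChar_iff {a : F} : IsUnit (quadraticChar F a) ↔ a ≠ 0 := by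
  refine ⟨fun h ha => ?_, fun ha => (IsUnit.mk0 a ha).map _⟩
  rw [quadraticChar_eq_zero_iff.2 ha] at h
  exact not_isUnit_zero h

theorem exists_quadraticChar_eq_three_mul_eq (hF : ringChar F ≠ 2) (hcard : 5 < Fintype.card F)
    {x y z : F} (hx : x ≠ 0) (hy : y ≠ 0) (hz : z ≠ 0) {e₁ e₂ e₃ : ℤ} (h₁ : IsUnit e₁)
    (h₂ : IsUnit e₂) (h₃ : IsUnit e₃) (t : F) :
    ∃ a b c : F, quadraticChar F a = e₁ ∧ quadraticChar F b = e₂ ∧ quadraticChar F c = e₃ ∧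
      a * x + b * y + c * z = t := by
  obtain ⟨a, rfl⟩ := exists_quadraticChar_eq hF h₁
  obtain ⟨b, rfl⟩ := exists_quadraticChar_eq hF h₂
  obtain ⟨c, rfl⟩ := exists_quadraticChar_eq hF h₃
  rw [isUnit_quadraticChar_iff] at h₁ h₂ h₃
  obtain ⟨u, v, w, hu, hv, hw, huvw⟩ := exists_ne_zero_sq_mul_add_sq_mul_add_sq_mul_eq hF hcard
    (mul_ne_zero h₁ hx) (mul_ne_zero h₂ hy) (mul_ne_zero h₃ hz) t
  refine ⟨u ^ 2 * a, v ^ 2 * b, w ^ 2 * c, ?_, ?_, ?_, by linear_combination huvw⟩ <;>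
    rw [map_mul, quadraticChar_sq_one' ‹_›, one_mul]

theorem exists_quadraticChar_eq_sum_mul_eq (hF : ringChar F ≠ 2) (hcard : 5 < Fintype.card F)
    {I : Finset κ} {y : κ → F} (hI : 2 < #{k ∈ I | y k ≠ 0}) {e : κ → ℤ}
    (he : ∀ k, IsUnit (e k)) (t : F) :
    ∃ w : κ → F, (∀ k, quadraticChar F (w k) = e k) ∧ ∑ k ∈ I, w k * y k = t := by
  classical
  obtain ⟨k₁, hk₁, k₂, hk₂, k₃, hk₃, h₁₂, h₁₃, h₂₃⟩ := Finset.two_lt_card.1 hI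
  rw [Finset.mem_filter] at hk₁ hk₂ hk₃
  have hTI : {k₁, k₂, k₃} ⊆ I := by simp [Finset.insert_subset_iff, hk₁.1, hk₂.1, hk₃.1]
  refine exists_sum_mul_eq_of_subset (B := fun k => {a | quadraticChar F a = e k})
    (fun k => exists_quadraticChar_eq hF (he k)) hTI y (fun s => ?_) t
  obtain ⟨a, b, c, ha, hb, hc, hs⟩ := exists_quadraticChar_eq_three_mul_eq hF hcard
    hk₁.2 hk₂.2 hk₃.2 (he k₁) (he k₂) (he k₃) s
  refine ⟨fun k => if k = k₁ then a else if k = k₂ then b else c, ?_, ?_⟩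
  · simp [-quadraticChar_apply, ha, hb, hc, h₁₂.symm, h₁₃.symm, h₂₃.symm]
  · rw [Finset.sum_insert (by simp [h₁₂, h₁₃]), Finset.sum_pair h₂₃]
    simpa [h₁₂.symm, h₁₃.symm, h₂₃.symm, add_assoc] using hs

theorem hasWeightedZeroSum_quadraticChar_fin_three (hF : ringChar F ≠ 2) (x : Fin 3 → F) :
    HasWeightedZeroSum {a | quadraticChar F a = 1} x := by
  have hone : (1 : F) ∈ {a | quadraticChar F a = 1} := map_one (quadraticChar F)
  rcases eq_or_ne (x 0) 0 with h0 | h0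
  · exact .of_eq_zero hone h0
  rcases eq_or_ne (x 1) 0 with h1 | h1
  · exact .of_eq_zero hone h1
  obtain ⟨u, v, huv⟩ := exists_sq_mul_add_sq_mul_eq hF h0 h1 (-x 2)
  have hsq (c : F) : c ^ 2 = 0 ∨ c ^ 2 ∈ {a | quadraticChar F a = 1} :=
    (eq_or_ne c 0).imp (by simp +contextual) quadraticChar_sq_one'
  refine hasWeightedZeroSum_iff_of_fintype.2 ⟨![u ^ 2, v ^ 2, 1], ?_, ⟨2, hone⟩, ?_⟩
  · simp only [Fin.forall_fin_succ]
    exact ⟨hsq u, hsq v, .inr hone, finZeroElim⟩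
  · simp [Fin.sum_univ_three, huv]

theorem not_hasWeightedZeroSum_quadraticChar {g : F} (hg : quadraticChar F g = -1) :
    ¬ HasWeightedZeroSum {a | quadraticChar F a = 1} ![1, -g] := by
  rw [hasWeightedZeroSum_iff_of_fintype]
  rintro ⟨b, hb, ⟨k, hk⟩, hsum⟩
  simp only [Fin.sum_univ_two, Matrix.cons_val_zero, Matrix.cons_val_one, mul_one] at hsum
  have hb01 : b 0 = b 1 * g := by linear_combination hsum
  have hsign : quadraticChar F (b 0) = -quadraticChar F (b 1) := by
    rw [hb01, map_mul, hg, mul_neg_one]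
  have hval (k : Fin 2) : quadraticChar F (b k) = 0 ∨ quadraticChar F (b k) = 1 :=
    (hb k).imp_left quadraticChar_eq_zero_iff.2
  have hzero : ∀ k, quadraticChar F (b k) = 0 := by
    rw [Fin.forall_fin_two]
    have h0 := hval 0
    have h1 := hval 1
    omega
  exact zero_ne_one ((hzero k).symm.trans hk)

end QuadraticChar

section SignWeights

variable {ι κ : Type*} {F : ι → Type*} [∀ i, Field (F i)]

theorem exists_forall_ne_zero_sum_mul_eq_zero [∀ i, Nontrivial (F i)ˣ]
    [∀ i, DecidableEq (F i)] {x : κ → ∀ i, F i} {I : Finset κ}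
    (hI : ∀ i, #{k ∈ I | x k i ≠ 0} ≠ 1) :
    ∃ a : κ → ∀ i, F i, (∀ k i, a k i ≠ 0) ∧ ∑ k ∈ I, a k * x k = 0 := by
  choose w hw hsum using fun i => exists_ne_zero_sum_mul_eq_zero (hI i)
  exact ⟨fun k i => w i k, fun k i => hw i k, funext fun i => by simpa using hsum i⟩

variable [∀ i, Fintype (F i)] [∀ i, DecidableEq (F i)]

theorem isUnit_prod_quadraticChar {a : ∀ i, F i} (ha : ∀ i, a i ≠ 0) (s : Finset ι) :
    IsUnit (∏ i ∈ s, quadraticChar (F i) (a i)) :=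
  IsUnit.prod_iff.2 fun i _ => isUnit_quadraticChar_iff.2 (ha i)

variable [Fintype ι]

variable (F) in
/-- The elements of a product of finite fields whose quadratic characters multiply to `1`; the
image of `S(n)` in `∏ ZMod p` when `n` is squarefree. Such elements are automatically units. -/
def signWeights : Set (∀ i, F i) := {a | ∏ i, quadraticChar (F i) (a i) = 1}

theorem mem_signWeights {a : ∀ i, F i} :
    a ∈ signWeights F ↔ ∏ i, quadraticChar (F i) (a i) = 1 :=
  Iff.rfl

theorem one_mem_signWeights : 1 ∈ signWeights F := by simp [signWeights]

theorem ne_zero_of_mem_signWeights {a : ∀ i, F i} (ha : a ∈ signWeights F) (i : ι) : a i ≠ 0 := by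
  have hprod : IsUnit (∏ i, quadraticChar (F i) (a i)) := mem_signWeights.1 ha ▸ isUnit_one
  exact isUnit_quadraticChar_iff.1 (IsUnit.prod_iff.1 hprod i (Finset.mem_univ i))

theorem update_mem_signWeights [DecidableEq ι] {a : ∀ i, F i} (ha : ∀ i, a i ≠ 0) {i : ι}
    {c : F i} (hc : quadraticChar (F i) c = ∏ j ∈ Finset.univ.erase i, quadraticChar (F j) (a j)) :
    Function.update a i c ∈ signWeights F := by
  have hrest : ∏ j ∈ Finset.univ.erase i, quadraticChar (F j) (Function.update a i c j) =
      ∏ j ∈ Finset.univ.erase i, quadraticChar (F j) (a j) :=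
    Finset.prod_congr rfl fun j hj => by rw [Function.update_of_ne (Finset.ne_of_mem_erase hj)]
  rw [mem_signWeights, ← Finset.mul_prod_erase _ _ (Finset.mem_univ i), hrest,
    Function.update_self, hc]
  exact Int.isUnit_mul_self (isUnit_prod_quadraticChar ha _)

theorem exists_mem_signWeights_mul_eq (hF : ∀ i, ringChar (F i) ≠ 2) {a x : ∀ i, F i}
    (ha : ∀ i, a i ≠ 0) {i : ι} (hx : x i = 0) : ∃ b ∈ signWeights F, b * x = a * x := by
  classical
  obtain ⟨c, hc⟩ := exists_quadraticChar_eq (hF i) (isUnit_prod_quadraticChar ha _)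
  refine ⟨Function.update a i c, update_mem_signWeights ha hc, funext fun j => ?_⟩
  rcases eq_or_ne j i with rfl | hj
  · simp [hx]
  · simp [hj]

theorem hasWeightedZeroSum_signWeights_of_forall_ne (hF : ∀ i, ringChar (F i) ≠ 2)
    {x : κ → ∀ i, F i} {I : Finset κ} (hI : ∀ i, #{k ∈ I | x k i ≠ 0} ≠ 1) {k₀ : κ}
    (hk₀ : k₀ ∈ I) (hx : ∀ k ∈ I, k ≠ k₀ → ∃ i, x k i = 0) :
    HasWeightedZeroSum (signWeights F) x := by
  have (i : ι) : Nontrivial (F i)ˣ := nontrivial_units_of_ringChar_ne_two (hF i)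
  obtain ⟨a, ha, hsum⟩ := exists_forall_ne_zero_sum_mul_eq_zero hI
  -- `x k₀` may have no zero coordinate in which to repair its sign, so its weight is scaled to `1`.
  have hscale (k : κ) (hk : k ∈ I) : ∃ b ∈ signWeights F, b * x k = (a k₀)⁻¹ * a k * x k := by
    rcases eq_or_ne k k₀ with rfl | hne
    · refine ⟨1, one_mem_signWeights, ?_⟩
      rw [show (a k)⁻¹ * a k = 1 from funext fun i => inv_mul_cancel₀ (ha k i)]
    · obtain ⟨i, hi⟩ := hx k hk hne
      exact exists_mem_signWeights_mul_eq hF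
        (fun j => mul_ne_zero (inv_ne_zero (ha k₀ j)) (ha k j)) hi
  choose! b hb hbx using hscale
  refine ⟨I, ⟨k₀, hk₀⟩, b, hb, ?_⟩
  rw [Finset.sum_congr rfl hbx]
  simp_rw [mul_assoc]
  rw [← Finset.mul_sum, hsum, mul_zero]

theorem hasWeightedZeroSum_signWeights_of_two_lt_card (hF : ∀ i, ringChar (F i) ≠ 2)
    {x : κ → ∀ i, F i} {I : Finset κ} (hI : ∀ i, #{k ∈ I | x k i ≠ 0} ≠ 1) {i : ι}
    (hcard : 5 < Fintype.card (F i)) (hi : 2 < #{k ∈ I | x k i ≠ 0}) :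
    HasWeightedZeroSum (signWeights F) x := by
  classical
  have (i : ι) : Nontrivial (F i)ˣ := nontrivial_units_of_ringChar_ne_two (hF i)
  obtain ⟨a, ha, hsum⟩ := exists_forall_ne_zero_sum_mul_eq_zero hI
  obtain ⟨w, hw, hwsum⟩ := exists_quadraticChar_eq_sum_mul_eq (hF i) hcard hi
    (fun k => isUnit_prod_quadraticChar (ha k) (Finset.univ.erase i)) 0
  have hne : I.Nonempty := (Finset.card_pos.1 (pos_of_gt hi)).mono (Finset.filter_subset _ I)
  refine ⟨I, hne, fun k => Function.update (a k) i (w k),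
    fun k _ => update_mem_signWeights (ha k) (hw k), funext fun j => ?_⟩
  rcases eq_or_ne j i with rfl | hj
  · simpa using hwsum
  · simpa [hj] using congrFun hsum j

theorem hasWeightedZeroSum_signWeights_of_card_lt [Fintype κ] (hF : ∀ i, ringChar (F i) ≠ 2)
    (hcard : ∀ i, 5 < Fintype.card (F i)) (hκ : 2 < Fintype.card κ)
    (hικ : Fintype.card ι < Fintype.card κ) (x : κ → ∀ i, F i) :
    HasWeightedZeroSum (signWeights F) x := by
  classical
  obtain ⟨I, -, ⟨k, hk⟩, hI, hsupp⟩ :=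
    exists_subset_card_filter_ne_one (fun k i => x k i ≠ 0) (P := .univ) (J := .univ) hικ
  replace hI (i : ι) := hI i (Finset.mem_univ i)
  rcases hsupp with rfl | ⟨i, -, hi⟩
  swap
  · exact hasWeightedZeroSum_signWeights_of_forall_ne hF hI hk
      fun k' hk' _ => ⟨i, not_not.1 (hi k' hk')⟩
  by_cases hfull : ∃ k₀, ∀ k ≠ k₀, ∃ i, x k i = 0
  · obtain ⟨k₀, hk₀⟩ := hfull
    exact hasWeightedZeroSum_signWeights_of_forall_ne hF hI (Finset.mem_univ k₀)
      fun k _ => hk₀ k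
  push Not at hfull
  obtain ⟨k₁, -, hk₁⟩ := hfull k
  obtain ⟨k₂, hne, hk₂⟩ := hfull k₁
  obtain ⟨k₃, -, hk₃⟩ : ∃ k₃ ∈ Finset.univ, k₃ ∉ ({k₁, k₂} : Finset κ) :=
    Finset.exists_mem_notMem_of_card_lt_card (Finset.card_le_two.trans_lt hκ)
  by_cases hx₃ : x k₃ = 0
  · exact .of_eq_zero one_mem_signWeights hx₃
  obtain ⟨i, hi⟩ := Function.ne_iff.1 hx₃
  refine hasWeightedZeroSum_signWeights_of_two_lt_card hF hI (hcard i) (Finset.two_lt_card.2 ?_)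
  simp only [Finset.mem_insert, Finset.mem_singleton, not_or] at hk₃
  exact ⟨k₁, by simp [hk₁], k₂, by simp [hk₂], k₃, by simpa using hi, hne.symm,
    Ne.symm hk₃.1, Ne.symm hk₃.2⟩

end SignWeights

section JSet

theorem mem_jSet_iff {n : ℕ} [NeZero n] {a : ZMod n} :
    a ∈ JSet n ↔ jacobiSym (a.val : ℤ) n = 1 := by
  refine ⟨And.right, fun h => ⟨?_, h⟩⟩
  rw [← ZMod.natCast_zmod_val a, ZMod.isUnit_iff_coprime, Nat.coprime_iff_gcd_eq_one,
    ← Int.gcd_natCast_natCast]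
  by_contra hgcd
  exact zero_ne_one ((jacobiSym.eq_zero_iff_not_coprime.2 hgcd).symm.trans h)

theorem jSet_eq_of_prime (p : ℕ) [Fact p.Prime] : JSet p = {a | quadraticChar (ZMod p) a = 1} := by
  ext a
  rw [mem_jSet_iff, ← jacobiSym.legendreSym.to_jacobiSym, legendreSym]
  simp [-quadraticChar_apply]

theorem jacobiSym_prod_right {ι : Type*} (a : ℤ) (s : Finset ι) {b : ι → ℕ}
    (hb : ∀ i ∈ s, b i ≠ 0) :
    jacobiSym a (∏ i ∈ s, b i) = ∏ i ∈ s, jacobiSym a (b i) := by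
  rw [← Finset.prod_map_toList, jacobiSym.list_prod_right (by simpa using hb), List.map_map,
    ← Finset.prod_map_toList, Function.comp_def]

variable {ι : Type*} [Fintype ι] {p : ι → ℕ} [∀ i, Fact (p i).Prime]

theorem jSet_prod_eq (hp : Pairwise (Function.onFun Nat.Coprime p)) :
    JSet (∏ i, p i) = ZMod.prodEquivPi p hp ⁻¹' signWeights fun i => ZMod (p i) := by
  have hne (i : ι) : p i ≠ 0 := NeZero.ne (p i)
  have : NeZero (∏ i, p i) := ⟨Finset.prod_ne_zero_iff.2 fun i _ => hne i⟩
  ext a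
  rw [mem_jSet_iff, jacobiSym_prod_right _ _ fun i _ => hne i]
  simp [mem_signWeights, ← jacobiSym.legendreSym.to_jacobiSym, legendreSym, -quadraticChar_apply]

theorem davW_jSet_prod (hp : p.Injective) (h7 : ∀ i, 7 ≤ p i) (hι : 2 ≤ Fintype.card ι) :
    DavW (∏ i, p i) (JSet (∏ i, p i)) = Fintype.card ι + 1 := by
  classical
  have hcoprime : Pairwise (Function.onFun Nat.Coprime p) := fun i j hij =>
    (Nat.coprime_primes Fact.out Fact.out).2 (hp.ne hij)
  rw [jSet_prod_eq hcoprime]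
  refine davW_preimage_eq _
    (not_hasWeightedZeroSum_pi_single fun a ha => ne_zero_of_mem_signWeights ha) ?_
  refine hasWeightedZeroSum_signWeights_of_card_lt (fun i => ?_) (fun i => ?_) ?_ ?_
  · rw [ZMod.ringChar_zmod_n]
    have := h7 i
    omega
  · rw [ZMod.card]
    exact lt_of_lt_of_le (by norm_num) (h7 i)
  · rw [Fintype.card_fin]
    omega
  · simp

theorem davW_jSet_of_prime {p : ℕ} [Fact p.Prime] (hp : p ≠ 2) : DavW p (JSet p) = 3 := by
  have hchar : ringChar (ZMod p) ≠ 2 := by rwa [ZMod.ringChar_zmod_n]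
  obtain ⟨g, hg⟩ := quadraticChar_exists_neg_one hchar
  rw [jSet_eq_of_prime]
  exact davW_preimage_eq (RingEquiv.refl _) (not_hasWeightedZeroSum_quadraticChar hg)
    (hasWeightedZeroSum_quadraticChar_fin_three hchar)

end JSet

theorem davenport_S (n : ℕ) (hodd : Odd n) :
    (n.Prime → DavW n (JSet n) = 3) ∧
    (Squarefree n → (∀ p : ℕ, p.Prime → p ∣ n → 7 ≤ p) →
      2 ≤ (Nat.primeFactorsList n).length →
      DavW n (JSet n) = (Nat.primeFactorsList n).length + 1) := by
  refine ⟨fun hp => ?_, fun hsq h7 h2 => ?_⟩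
  · have : Fact n.Prime := ⟨hp⟩
    exact davW_jSet_of_prime (hodd.ne_two_of_dvd_nat dvd_rfl)
  · have hcard : Fintype.card n.primeFactors = n.primeFactorsList.length := by
      rw [Fintype.card_coe]
      exact List.toFinset_card_of_nodup
        ((Nat.squarefree_iff_nodup_primeFactorsList hsq.ne_zero).1 hsq)
    have hprime (p : n.primeFactors) : Fact p.1.Prime := ⟨Nat.prime_of_mem_primeFactors p.2⟩
    have hn : ∏ p : n.primeFactors, p.1 = n :=
      (Finset.prod_coe_sort n.primeFactors id).trans
        (Nat.prod_primeFactors_of_squarefree hsq)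
    have hdav := davW_jSet_prod (p := fun p : n.primeFactors => p.1) Subtype.val_injective
      (fun p => h7 p (hprime p).out (Nat.dvd_of_mem_primeFactors p.2)) (hcard ▸ h2)
    rwa [hn, hcard] at hdav
end

section
/- Let A = S(n), where n is odd and squarefree, every prime divisor of n is at least 7, and Ω(n) ≥ 2. Let S = (x_1,…,x_k) be a sequence in Z_n of length k = Ω(n). (i) Suppose S is equivalent with respect to A to a sequence (y_1,…,y_k) for which there is a prime divisor p of n such that p does not divide y_1 but p divides y_i for all i ≥ 2, and, setting n' = n/p and letting T' be the image of (y_2,…,y_k) under the natural map Z_n → Z_{n'}, the sequence T' is a U(n')-extremal sequence for the Davenport constant. Then S is an A-extremal sequence for the Davenport constant. (ii) If Ω(n) = 2 and S is equivalent with respect to A to a sequence (y_1, y_2) with y_1 ∈ S(n) and −y_2 ∈ U(n) ∖ S(n), then S is an A-extremal sequence for the Davenport constant. -/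
open scoped BigOperators

/-!
For squarefree `n` the ring `ZMod n` is a product of the fields `ZMod p`, and a unit lies in `S(n)`
exactly when the product of the quadratic characters of its components is `1`. Whether a
subsequence can be annihilated thus depends on which sign patterns (the quadratic characters of the
weights) annihilate it modulo each `p`: every pattern when it has no or at least three terms
prime to `p`, the patterns with prescribed product `e u * e v` when exactly the terms `u, v` are
prime to `p`, none when there is exactly one such term. In a sequence of more than `Ω(n)` terms,
discarding terms leaves a subsequence for which the last case never occurs; then the pattern `1` is
a product of admissible patterns, because two of the prescribed-product cosets attached to
different pairs multiply to the whole group of patterns. Hence `D_{S(n)}(n) ≤ Ω(n) + 1`, and a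
sequence of length `Ω(n)` is extremal as soon as it has no weighted zero-sum subsequence.
-/

section PointwiseProducts

open Set
open scoped Pointwise

variable {ι G : Type*} [CommGroup G]

@[to_additive]
theorem finsetProd_eq_univ_of_subset {s t : Finset ι} {A : ι → Set G} (hts : t ⊆ s)
    (ht : ∏ i ∈ t, A i = univ) (hs : ∀ i ∈ s, (A i).Nonempty) : ∏ i ∈ s, A i = univ := by
  classical
  choose! g hg using hs
  rw [← Finset.prod_sdiff hts, ht]
  exact mul_univ ⟨_, finsetProd_mem_finsetProd _ _ g fun i hi ↦ hg i (Finset.sdiff_subset hi)⟩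

theorem setOf_mul_eq_mul_setOf_mul_eq {u v i w : ι} (huv : u ≠ v) (hiu : i ≠ u) (hiv : i ≠ v)
    (hiw : i ≠ w) (s t : G) :
    {e : ι → G | e u * e v = s} * {e : ι → G | e i * e w = t} = univ := by
  classical
  refine eq_univ_of_forall fun g ↦ ?_
  let a : ι → G := Pi.mulSingle u s *
    Pi.mulSingle i (g i * (g w / (Pi.mulSingle u s : ι → G) w) / t)
  refine ⟨a, ?_, a⁻¹ * g, ?_, mul_inv_cancel_left a g⟩
  · simp [a, huv, hiu.symm, hiv.symm]
  · simp only [a, mem_ofPred_eq, Pi.mul_apply, Pi.inv_apply, Pi.mulSingle_eq_same,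
      Pi.mulSingle_eq_of_ne hiu, Pi.mulSingle_eq_of_ne hiw.symm, one_mul, mul_one]
    rw [← div_eq_inv_mul, ← div_eq_inv_mul, div_mul_eq_mul_div, div_div_cancel]

end PointwiseProducts

section SetSystems

open Finset

variable {ι κ : Type*}

theorem exists_subset_card_inter_ne_one [DecidableEq ι] (N : κ → Finset ι) (P : Finset κ)
    (I : Finset ι) (hPI : #P < #I) :
    ∃ J ⊆ I, J.Nonempty ∧ (∀ k ∈ P, #(J ∩ N k) ≠ 1) ∧ (J = I ∨ ∃ k ∈ P, J ∩ N k = ∅) := by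
  classical
  induction P using Finset.strongInduction generalizing I with
  | H P ih =>
    by_cases hI : ∀ k ∈ P, #(I ∩ N k) ≠ 1
    · exact ⟨I, subset_rfl, card_pos.1 (by lia), hI, .inl rfl⟩
    push Not at hI
    obtain ⟨k, hk, hk1⟩ := hI
    have hlt : #(P.erase k) < #(I \ N k) := by
      have := card_sdiff_add_card_inter I (N k)
      have := card_erase_add_one hk
      lia
    obtain ⟨J, hJI, hJ, hJ1, -⟩ := ih _ (erase_ssubset hk) _ hlt
    have hJk : J ∩ N k = ∅ :=
      disjoint_iff_inter_eq_empty.1 (disjoint_of_subset_left hJI sdiff_disjoint)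
    refine ⟨J, hJI.trans sdiff_subset, hJ, fun m hm ↦ ?_, .inr ⟨k, hk, hJk⟩⟩
    obtain rfl | hmk := eq_or_ne m k
    · simp [hJk]
    · exact hJ1 m (mem_erase.2 ⟨hmk, hm⟩)

theorem exists_mem_notMem_of_card_eq_two [Fintype ι] (hι : 2 < Fintype.card ι) {N : κ → Finset ι}
    (hN : ∀ k, #(N k) = 2) (hcover : ∀ i, ∃ k, i ∈ N k) : ∃ q r, ∃ i ∈ N r, i ∉ N q := by
  obtain ⟨i₀⟩ : Nonempty ι := Fintype.card_pos_iff.1 (by lia)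
  obtain ⟨q, -⟩ := hcover i₀
  obtain ⟨i, -, hi⟩ := exists_mem_notMem_of_card_lt_card (s := N q) (t := univ) (by simp [hN, hι])
  obtain ⟨r, hr⟩ := hcover i
  exact ⟨q, r, i, hr, hi⟩

end SetSystems

section BinaryQuadraticForms

open Polynomial

variable {F : Type*} [Field F]

theorem exists_mul_sq_add_mul_sq_eq_s8 [Finite F] (hF2 : ringChar F ≠ 2) {a b : F}
    (ha : a ≠ 0) (hb : b ≠ 0) (t : F) : ∃ u v : F, a * u ^ 2 + b * v ^ 2 = t := by
  have := Fintype.ofFinite F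
  have hf : (C a * X ^ 2).degree = 2 := degree_C_mul_X_pow 2 ha
  have hg : (C b * X ^ 2 - C t).degree = 2 := by
    have hbX : (C b * X ^ 2).degree = 2 := degree_C_mul_X_pow 2 hb
    rw [degree_sub_C (by rw [hbX]; norm_num), hbX]
  obtain ⟨u, v, h⟩ :=
    FiniteField.exists_root_sum_quadratic hf hg (FiniteField.odd_card_of_char_ne_two hF2)
  simp only [eval_mul, eval_sub, eval_pow, eval_X, eval_C] at h
  exact ⟨u, v, by linear_combination h⟩

variable [Fintype F]

theorem exists_ne_zero_sq_ne_and_sq_ne_neg (hF : 5 < Fintype.card F) (c : F) :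
    ∃ m : F, m ≠ 0 ∧ m ^ 2 ≠ c ∧ m ^ 2 ≠ -c := by
  have hmonic : (X * (X ^ 2 - C c) * (X ^ 2 + C c)).Monic := by monicity!
  have hdeg : (X * (X ^ 2 - C c) * (X ^ 2 + C c)).natDegree ≤ 5 := by compute_degree
  obtain ⟨m, hm⟩ := exists_eval_ne_zero_of_natDegree_lt_card _ hmonic.ne_zero
    (by simpa using hdeg.trans_lt hF)
  simp only [eval_mul, eval_add, eval_sub, eval_pow, eval_X, eval_C, mul_ne_zero_iff] at hm
  exact ⟨m, hm.1.1, sub_ne_zero.1 hm.1.2, fun h ↦ hm.2 (by rw [h, neg_add_cancel])⟩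

/- The point `(u₀, 0)` of the conic is replaced by the second intersection of the conic with the
line of slope `m` through its mirror image `(-u₀, 0)`. -/
theorem exists_ne_zero_mul_sq_add_mul_sq_eq_mul_sq (hF2 : ringChar F ≠ 2)
    (hF : 5 < Fintype.card F) {a b u₀ : F} (ha : a ≠ 0) (hb : b ≠ 0) (hu₀ : u₀ ≠ 0) :
    ∃ u v : F, u ≠ 0 ∧ v ≠ 0 ∧ a * u ^ 2 + b * v ^ 2 = a * u₀ ^ 2 := by
  obtain ⟨m, hm, hm_sub, hm_add⟩ := exists_ne_zero_sq_ne_and_sq_ne_neg hF (a / b)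
  have h_sub : a - b * m ^ 2 ≠ 0 := fun h ↦ hm_sub (by field_simp; linear_combination -h)
  have h_add : a + b * m ^ 2 ≠ 0 := fun h ↦ hm_add (by field_simp; linear_combination h)
  have h2 : (2 : F) ≠ 0 := Ring.two_ne_zero hF2
  refine ⟨u₀ * (a - b * m ^ 2) / (a + b * m ^ 2), 2 * a * u₀ * m / (a + b * m ^ 2),
    by positivity, by positivity, ?_⟩
  field_simp
  ring

theorem exists_ne_zero_mul_sq_add_mul_sq_eq_s8 (hF2 : ringChar F ≠ 2) (hF : 5 < Fintype.card F)
    {a b t : F} (ha : a ≠ 0) (hb : b ≠ 0) (ht : t ≠ 0) :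
    ∃ u v : F, u ≠ 0 ∧ v ≠ 0 ∧ a * u ^ 2 + b * v ^ 2 = t := by
  obtain ⟨u, v, rfl⟩ := exists_mul_sq_add_mul_sq_eq_s8 hF2 ha hb t
  obtain rfl | hu := eq_or_ne u 0
  · have hv : v ≠ 0 := by rintro rfl; simp at ht
    obtain ⟨v', u', hv', hu', h⟩ :=
      exists_ne_zero_mul_sq_add_mul_sq_eq_mul_sq hF2 hF hb ha hv
    exact ⟨u', v', hu', hv', by linear_combination h⟩
  obtain rfl | hv := eq_or_ne v 0
  · simpa using exists_ne_zero_mul_sq_add_mul_sq_eq_mul_sq hF2 hF ha hb hu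
  · exact ⟨u, v, hu, hv, rfl⟩

end BinaryQuadraticForms

section SignClasses

open Set
open scoped Pointwise

variable {F : Type*} [Field F] [Fintype F] [DecidableEq F]

variable (F) in
/-- The elements of a finite field whose quadratic character is the sign `e`: the nonzero squares
or the nonsquares. -/
def signClass (e : ℤˣ) : Set F := {b | quadraticChar F b = e}

theorem ne_zero_of_mem_signClass {e : ℤˣ} {b : F} (hb : b ∈ signClass F e) : b ≠ 0 := by
  rintro rfl
  exact e.ne_zero (hb.symm.trans quadraticChar_zero)

theorem mul_sq_mem_signClass {e : ℤˣ} {b u : F} (hb : b ∈ signClass F e) (hu : u ≠ 0) :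
    b * u ^ 2 ∈ signClass F e := by
  rw [signClass, mem_ofPred_eq, map_mul, quadraticChar_sq_one' hu, mul_one, hb]

theorem signClass_nonempty (hF2 : ringChar F ≠ 2) (e : ℤˣ) : (signClass F e).Nonempty := by
  obtain rfl | rfl := Int.units_eq_one_or e
  · exact ⟨1, by simp [signClass]⟩
  · obtain ⟨b, hb⟩ := quadraticChar_exists_neg_one hF2
    exact ⟨b, by simpa [signClass] using hb⟩

theorem exists_mem_signClass {a : F} (ha : a ≠ 0) : ∃ e, a ∈ signClass F e := by
  obtain h | h := quadraticChar_dichotomy ha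
  · exact ⟨1, by simpa [signClass] using h⟩
  · exact ⟨-1, by simpa [signClass] using h⟩

theorem smul_signClass_nontrivial (hF2 : ringChar F ≠ 2) (hF : 5 < Fintype.card F) {y : F}
    (hy : y ≠ 0) (e : ℤˣ) : (y • signClass F e).Nontrivial := by
  obtain ⟨b, hb⟩ := signClass_nonempty hF2 e
  obtain ⟨m, hm, hm1, -⟩ := exists_ne_zero_sq_ne_and_sq_ne_neg hF 1
  refine ⟨_, smul_mem_smul_set hb, _, smul_mem_smul_set (mul_sq_mem_signClass hb hm),
    fun h ↦ hm1 ?_⟩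
  simpa [hy, ne_zero_of_mem_signClass hb, eq_comm] using h

theorem compl_zero_subset_smul_signClass_add (hF2 : ringChar F ≠ 2) (hF : 5 < Fintype.card F)
    {y z : F} (hy : y ≠ 0) (hz : z ≠ 0) (d e : ℤˣ) :
    {0}ᶜ ⊆ y • signClass F d + z • signClass F e := by
  intro t ht
  obtain ⟨b, hb⟩ := signClass_nonempty hF2 d
  obtain ⟨c, hc⟩ := signClass_nonempty hF2 e
  obtain ⟨u, v, hu, hv, rfl⟩ := exists_ne_zero_mul_sq_add_mul_sq_eq_s8 hF2 hF
    (mul_ne_zero hy (ne_zero_of_mem_signClass hb)) (mul_ne_zero hz (ne_zero_of_mem_signClass hc)) ht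
  refine ⟨_, smul_mem_smul_set (mul_sq_mem_signClass hb hu), _,
    smul_mem_smul_set (mul_sq_mem_signClass hc hv), ?_⟩
  simp only [smul_eq_mul, mul_assoc]

theorem smul_signClass_add_add_eq_univ (hF2 : ringChar F ≠ 2) (hF : 5 < Fintype.card F)
    {x y z : F} (hx : x ≠ 0) (hy : y ≠ 0) (hz : z ≠ 0) (c d e : ℤˣ) :
    x • signClass F c + (y • signClass F d + z • signClass F e) = univ := by
  refine eq_univ_of_forall fun t ↦ ?_
  obtain ⟨b, hb, hbt⟩ := (smul_signClass_nontrivial hF2 hF hx c).exists_ne t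
  exact ⟨b, hb, t - b,
    compl_zero_subset_smul_signClass_add hF2 hF hy hz d e (sub_ne_zero.2 hbt.symm),
    add_sub_cancel b t⟩

end SignClasses

section SignPatterns

open Set
open scoped Pointwise

variable {F ι : Type*} [Field F] [Fintype F] [DecidableEq F] {x : ι → F} {I : Finset ι}

/-- The sign patterns `e` for which some weights `b i` with quadratic characters `e i` satisfy
`∑ i ∈ I, x i * b i = 0`. The values of `e` outside `I` are unconstrained. -/
def zeroSumSigns (x : ι → F) (I : Finset ι) : Set (ι → ℤˣ) :=
  {e | (0 : F) ∈ ∑ i ∈ I, x i • signClass F (e i)}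

theorem mem_zeroSumSigns {e : ι → ℤˣ} : e ∈ zeroSumSigns x I ↔
    ∃ b : ι → F, (∀ i ∈ I, b i ∈ signClass F (e i)) ∧ ∑ i ∈ I, x i * b i = 0 := by
  rw [zeroSumSigns, mem_ofPred_eq, mem_finsetSum]
  constructor
  · rintro ⟨g, hg, hsum⟩
    have hg' : ∀ i ∈ I, ∃ b ∈ signClass F (e i), x i * b = g i := fun i hi ↦ hg hi
    choose! b hb hbg using hg'
    exact ⟨b, hb, by rw [← hsum]; exact Finset.sum_congr rfl fun i hi ↦ hbg i hi⟩
  · rintro ⟨b, hb, hsum⟩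
    exact ⟨fun i ↦ x i * b i, fun hi ↦ smul_mem_smul_set (hb _ hi), hsum⟩

theorem zeroSumSigns_filter_ne_zero (hF2 : ringChar F ≠ 2) :
    zeroSumSigns x {i ∈ I | x i ≠ 0} = zeroSumSigns x I := by
  ext e
  rw [zeroSumSigns, zeroSumSigns, mem_ofPred_eq, mem_ofPred_eq, Finset.sum_filter_of_ne]
  intro i _ hi hx
  exact hi (by rw [hx, zero_smul_set (signClass_nonempty hF2 _)])

theorem zeroSumSigns_eq_univ_of_support_eq_empty (hF2 : ringChar F ≠ 2)
    (hI : {i ∈ I | x i ≠ 0} = ∅) : zeroSumSigns x I = univ := by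
  rw [← zeroSumSigns_filter_ne_zero hF2, hI]
  simp [zeroSumSigns]

theorem zeroSumSigns_eq_univ_of_two_lt_card_support (hF2 : ringChar F ≠ 2)
    (hF : 5 < Fintype.card F) (hI : 2 < Finset.card {i ∈ I | x i ≠ 0}) :
    zeroSumSigns x I = univ := by
  classical
  obtain ⟨i, j, l, hi, hj, hl, hij, hil, hjl⟩ := Finset.two_lt_card_iff.1 hI
  simp only [Finset.mem_filter] at hi hj hl
  refine eq_univ_of_forall fun e ↦ ?_
  have hthree : ∑ m ∈ {i, j, l}, x m • signClass F (e m) = univ := by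
    rw [Finset.sum_insert (by simp [hij, hil]), Finset.sum_pair hjl]
    exact smul_signClass_add_add_eq_univ hF2 hF hi.2 hj.2 hl.2 _ _ _
  have hall : ∑ m ∈ I, x m • signClass F (e m) = univ :=
    finsetSum_eq_univ_of_subset (by simp [Finset.insert_subset_iff, hi, hj, hl]) hthree
      fun m _ ↦ (signClass_nonempty hF2 _).smul_set
  rw [zeroSumSigns, mem_ofPred_eq, hall]
  exact mem_univ 0

theorem exists_setOf_mul_eq_subset_zeroSumSigns [DecidableEq ι] (hF2 : ringChar F ≠ 2) {u v : ι}
    (huv : u ≠ v) (hI : {i ∈ I | x i ≠ 0} = {u, v}) :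
    ∃ s : ℤˣ, {e : ι → ℤˣ | e u * e v = s} ⊆ zeroSumSigns x I := by
  have hx : ∀ i ∈ ({u, v} : Finset ι), x i ≠ 0 := fun i hi ↦ by
    rw [← hI] at hi
    exact (Finset.mem_filter.1 hi).2
  have hu : x u ≠ 0 := hx u (by simp)
  have hv : x v ≠ 0 := hx v (by simp)
  obtain ⟨s, hs⟩ := exists_mem_signClass (div_ne_zero (neg_ne_zero.2 hu) hv)
  refine ⟨s, fun e he ↦ ?_⟩
  obtain ⟨b, hb⟩ := signClass_nonempty hF2 (e u)
  have hc : b * (-x u / x v) ∈ signClass F (e v) := by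
    have hev : e u * s = e v := by rw [← show e u * e v = s from he, ← mul_assoc,
      Int.units_mul_self, one_mul]
    rw [signClass, mem_ofPred_eq, map_mul, hb, hs, ← hev, Units.val_mul]
  rw [← zeroSumSigns_filter_ne_zero hF2, hI, zeroSumSigns, mem_ofPred_eq, Finset.sum_pair huv]
  refine ⟨_, smul_mem_smul_set hb, _, smul_mem_smul_set hc, ?_⟩
  simp only [smul_eq_mul]
  field_simp
  ring

theorem zeroSumSigns_nonempty (hF2 : ringChar F ≠ 2) (hF : 5 < Fintype.card F)
    (hI : Finset.card {i ∈ I | x i ≠ 0} ≠ 1) : (zeroSumSigns x I).Nonempty := by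
  classical
  obtain h | h | h := lt_trichotomy (Finset.card {i ∈ I | x i ≠ 0}) 2
  · rw [zeroSumSigns_eq_univ_of_support_eq_empty hF2 (Finset.card_eq_zero.1 (by lia))]
    exact univ_nonempty
  · obtain ⟨u, v, huv, huvI⟩ := Finset.card_eq_two.1 h
    obtain ⟨s, hs⟩ := exists_setOf_mul_eq_subset_zeroSumSigns hF2 huv huvI
    exact ⟨Pi.mulSingle u s, hs (by simp [huv.symm])⟩
  · rw [zeroSumSigns_eq_univ_of_two_lt_card_support hF2 hF h]
    exact univ_nonempty

end SignPatterns

section ProductsOfFields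

open Finset
open scoped Pointwise

variable {ι κ : Type*} {F : κ → Type*} [∀ k, Field (F k)] [∀ k, Fintype (F k)]
  [∀ k, DecidableEq (F k)]

theorem exists_zeroSumSigns_mul_eq_univ [Fintype ι]
    (hF2 : ∀ k, ringChar (F k) ≠ 2) (hι : 2 < Fintype.card ι) {x : ι → ∀ k, F k}
    (hx : ∀ i, x i ≠ 0) (hcard : ∀ k, #{i | x i k ≠ 0} = 2) :
    ∃ q r, q ≠ r ∧ zeroSumSigns (x · q) univ * zeroSumSigns (x · r) univ = Set.univ := by
  classical
  obtain ⟨q, r, i, hir, hiq⟩ := exists_mem_notMem_of_card_eq_two hι hcard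
    fun i ↦ by simpa using Function.ne_iff.1 (hx i)
  obtain ⟨u, v, huv, hq⟩ := card_eq_two.1 (hcard q)
  obtain ⟨w, hwr, hwi⟩ := exists_mem_ne (by rw [hcard r]; exact one_lt_two) i
  have hr : ({j | x j r ≠ 0} : Finset ι) = {i, w} := .symm <| eq_of_subset_of_card_le
    (insert_subset hir (singleton_subset_iff.2 hwr)) (by rw [hcard, card_pair hwi.symm])
  obtain ⟨hiu, hiv⟩ : i ≠ u ∧ i ≠ v := by simpa [hq] using hiq
  obtain ⟨s, hs⟩ := exists_setOf_mul_eq_subset_zeroSumSigns (hF2 q) huv hq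
  obtain ⟨t, ht⟩ := exists_setOf_mul_eq_subset_zeroSumSigns (hF2 r) hwi.symm hr
  refine ⟨q, r, by rintro rfl; exact hiq hir, Set.eq_univ_of_univ_subset ?_⟩
  rw [← setOf_mul_eq_mul_setOf_mul_eq huv hiu hiv hwi.symm s t]
  exact Set.mul_subset_mul hs ht

variable [Fintype κ]

theorem exists_weights_of_prod_zeroSumSigns_eq_univ {x : ι → ∀ k, F k} {J : Finset ι}
    (h : ∏ k, zeroSumSigns (x · k) J = Set.univ) :
    ∃ a : ι → ∀ k, F k, (∀ i ∈ J, ∏ k, quadraticChar (F k) (a i k) = 1) ∧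
      ∑ i ∈ J, a i * x i = 0 := by
  obtain ⟨e, he, hprod⟩ := (Set.mem_fintype_prod _ _).1 (h ▸ Set.mem_univ (1 : ι → ℤˣ))
  choose b hb hsum using fun k ↦ mem_zeroSumSigns.1 (he k)
  refine ⟨fun i k ↦ b k i, fun i hi ↦ ?_, funext fun k ↦ ?_⟩
  · rw [prod_congr rfl fun k _ ↦ hb k i hi, ← Units.coe_prod, ← Finset.prod_apply, hprod]
    rfl
  · simpa [mul_comm] using hsum k

theorem exists_prod_zeroSumSigns_eq_univ [Fintype ι] (hF2 : ∀ k, ringChar (F k) ≠ 2)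
    (hF : ∀ k, 5 < Fintype.card (F k)) (hκ : Fintype.card κ < Fintype.card ι)
    (hι : 2 < Fintype.card ι) {x : ι → ∀ k, F k} (hx : ∀ i, x i ≠ 0) :
    ∃ J : Finset ι, J.Nonempty ∧ ∏ k, zeroSumSigns (x · k) J = Set.univ := by
  classical
  obtain ⟨J, -, hJ, hJ1, hJ0⟩ := exists_subset_card_inter_ne_one (fun k ↦ {i | x i k ≠ 0})
    (univ : Finset κ) (univ : Finset ι) (by simpa using hκ)
  simp only [mem_univ, true_and, forall_const, inter_filter, inter_univ] at hJ1 hJ0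
  have hne k : (zeroSumSigns (x · k) J).Nonempty := zeroSumSigns_nonempty (hF2 k) (hF k) (hJ1 k)
  refine ⟨J, hJ, ?_⟩
  by_cases hfull : ∃ k, zeroSumSigns (x · k) J = Set.univ
  · obtain ⟨k, hk⟩ := hfull
    exact finsetProd_eq_univ_of_subset (subset_univ {k}) (by rwa [prod_singleton]) fun k _ ↦ hne k
  push Not at hfull
  obtain rfl : J = univ := hJ0.resolve_right fun ⟨k, hk⟩ ↦
    hfull k (zeroSumSigns_eq_univ_of_support_eq_empty (hF2 k) hk)
  have hcard k : #{i | x i k ≠ 0} = 2 := by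
    have h0 : #{i | x i k ≠ 0} ≠ 0 := fun h ↦ hfull k
      (zeroSumSigns_eq_univ_of_support_eq_empty (hF2 k) (card_eq_zero.1 h))
    have h2 : ¬ 2 < #{i | x i k ≠ 0} := fun h ↦ hfull k
      (zeroSumSigns_eq_univ_of_two_lt_card_support (hF2 k) (hF k) h)
    have h1 := hJ1 k
    lia
  obtain ⟨q, r, hqr, hqr_univ⟩ := exists_zeroSumSigns_mul_eq_univ hF2 hι hx hcard
  exact finsetProd_eq_univ_of_subset (subset_univ {q, r}) (by rwa [prod_pair hqr]) fun k _ ↦ hne k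

theorem exists_weighted_zero_sum_pi [Fintype ι] (hF2 : ∀ k, ringChar (F k) ≠ 2)
    (hF : ∀ k, 5 < Fintype.card (F k)) (hκ : Fintype.card κ < Fintype.card ι)
    (hι : 2 < Fintype.card ι) (x : ι → ∀ k, F k) :
    ∃ J : Finset ι, J.Nonempty ∧ ∃ a : ι → ∀ k, F k,
      (∀ i ∈ J, ∏ k, quadraticChar (F k) (a i k) = 1) ∧ ∑ i ∈ J, a i * x i = 0 := by
  by_cases hx : ∀ i, x i ≠ 0
  · obtain ⟨J, hJ, h⟩ := exists_prod_zeroSumSigns_eq_univ hF2 hF hκ hι hx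
    exact ⟨J, hJ, exists_weights_of_prod_zeroSumSigns_eq_univ h⟩
  · push Not at hx
    obtain ⟨i, hi⟩ := hx
    exact ⟨{i}, singleton_nonempty i, 1, by simp, by simp [hi]⟩

end ProductsOfFields

section JacobiSymbol

variable {n : ℕ}

/-- The Jacobi symbol `a ↦ (a / n)` as a multiplicative character of `ZMod n`. -/
def jacobiChar (n : ℕ) : ZMod n →* ℤ where
  toFun a := jacobiSym a.val n
  map_one' := by
    have h := ZMod.val_natCast n 1
    rw [Nat.cast_one] at h
    rw [h, Int.natCast_mod, ← jacobiSym.mod_left, Nat.cast_one, jacobiSym.one_left]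
  map_mul' a b := by
    rw [ZMod.val_mul, Int.natCast_mod, ← jacobiSym.mod_left, Nat.cast_mul, jacobiSym.mul_left]

/-- `S(n)` as a subgroup of the unit group of `ZMod n`. -/
def jacobiKer (n : ℕ) : Subgroup (ZMod n)ˣ := ((jacobiChar n).comp (Units.coeHom (ZMod n))).ker

theorem JSet_eq_ofUnits_jacobiKer (n : ℕ) : JSet n = ((jacobiKer n).ofUnits : Set (ZMod n)) := by
  ext a
  constructor
  · rintro ⟨⟨u, rfl⟩, hu⟩
    exact (jacobiKer n).mem_ofUnits (y := u) hu rfl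
  · rintro ⟨u, hu, rfl⟩
    exact ⟨u.isUnit, hu⟩

theorem mem_JSet_iff_jacobiChar_eq_one [NeZero n] {a : ZMod n} :
    a ∈ JSet n ↔ jacobiChar n a = 1 := by
  refine ⟨fun h ↦ h.2, fun h ↦ ⟨?_, h⟩⟩
  have hcop : ¬ jacobiSym a.val n = 0 := by
    rw [show jacobiSym a.val n = 1 from h]
    exact one_ne_zero
  rw [jacobiSym.eq_zero_iff_not_coprime, not_not, Int.gcd_natCast_natCast] at hcop
  rwa [← ZMod.natCast_zmod_val a, ZMod.isUnit_iff_coprime]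

theorem jacobiSym_eq_prod_primeFactors (hn : Squarefree n) (a : ℤ) :
    jacobiSym a n = ∏ p ∈ n.primeFactors, jacobiSym a p := by
  have hnodup := (Nat.squarefree_iff_nodup_primeFactorsList hn.ne_zero).1 hn
  rw [Nat.primeFactors, List.prod_toFinset _ hnodup, ← jacobiSym.list_prod_right,
    Nat.prod_primeFactorsList hn.ne_zero]
  exact fun p hp ↦ (Nat.prime_of_mem_primeFactorsList hp).ne_zero

instance fact_prime_primeFactors (p : n.primeFactors) : Fact (p : ℕ).Prime :=
  ⟨Nat.prime_of_mem_primeFactors p.2⟩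

theorem nonempty_ringEquiv_pi_primeFactors (hn : Squarefree n) :
    Nonempty (ZMod n ≃+* ∀ p : n.primeFactors, ZMod p) := by
  have hprod : n = ∏ p : n.primeFactors, (p : ℕ) := by
    rw [Finset.prod_coe_sort n.primeFactors fun p ↦ p, Nat.prod_primeFactors_of_squarefree hn]
  have hcop : Pairwise (Function.onFun Nat.Coprime fun p : n.primeFactors ↦ (p : ℕ)) :=
    fun p q hpq ↦ (Nat.coprime_primes Fact.out Fact.out).2 (Subtype.coe_ne_coe.2 hpq)
  exact ⟨(ZMod.ringEquivCongr hprod).trans (ZMod.prodEquivPi _ hcop)⟩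

theorem jacobiChar_eq_prod_quadraticChar (hn : Squarefree n)
    (φ : ZMod n →+* ∀ p : n.primeFactors, ZMod p) (a : ZMod n) :
    jacobiChar n a = ∏ p : n.primeFactors, quadraticChar (ZMod p) (φ a p) := by
  have : NeZero n := ⟨hn.ne_zero⟩
  have hφ : φ a = (a.val : ∀ p : n.primeFactors, ZMod p) := by
    rw [← map_natCast φ, ZMod.natCast_zmod_val]
  calc jacobiChar n a = ∏ p : n.primeFactors, jacobiSym a.val p := by
        rw [Finset.prod_coe_sort n.primeFactors fun p ↦ jacobiSym a.val p]
        exact jacobiSym_eq_prod_primeFactors hn _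
    _ = ∏ p : n.primeFactors, quadraticChar (ZMod p) (φ a p) := by
        refine Finset.prod_congr rfl fun p _ ↦ ?_
        rw [← jacobiSym.legendreSym.to_jacobiSym, legendreSym, hφ, Pi.natCast_apply,
          Int.cast_natCast]

theorem hasWZSSub_JSet (hn : Squarefree n) (hp : ∀ p, p.Prime → p ∣ n → 5 < p) {l : ℕ}
    (hl : n.primeFactors.card < l) (hl2 : 2 < l) (S : Fin l → ZMod n) :
    HasWZSSub (JSet n) S := by
  have : NeZero n := ⟨hn.ne_zero⟩
  obtain ⟨φ⟩ := nonempty_ringEquiv_pi_primeFactors hn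
  have hp5 (p : n.primeFactors) : 5 < (p : ℕ) := hp p Fact.out (Nat.dvd_of_mem_primeFactors p.2)
  obtain ⟨J, hJ, a, ha, hsum⟩ := exists_weighted_zero_sum_pi
    (F := fun p : n.primeFactors ↦ ZMod p)
    (fun p ↦ by rw [ZMod.ringChar_zmod_n]; have := hp5 p; lia)
    (fun p ↦ by rw [ZMod.card]; exact hp5 p)
    (by simpa using hl) (by simpa using hl2) (fun i ↦ φ (S i))
  refine ⟨J, hJ, fun i ↦ φ.symm (a i), fun i hi ↦ ?_, φ.injective ?_⟩
  · rw [mem_JSet_iff_jacobiChar_eq_one, jacobiChar_eq_prod_quadraticChar hn φ]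
    simpa using ha i hi
  · simpa using hsum

end JacobiSymbol

section ZeroSumSubsequences

open Finset

variable {n l : ℕ} {A : Set (ZMod n)} {S : Fin l → ZMod n}

theorem HasWZSSub.of_comp_embedding {m : ℕ} (f : Fin m ↪ Fin l) (h : HasWZSSub A (S ∘ f)) :
    HasWZSSub A S := by
  obtain ⟨I, hI, a, ha, hsum⟩ := h
  refine ⟨I.map f, hI.map, Function.extend f a 0, ?_, ?_⟩
  · simpa [f.injective.extend_apply] using ha
  · simpa [f.injective.extend_apply] using hsum

theorem HasWZSSub.map {m : ℕ} {B : Set (ZMod m)} (φ : ZMod n →+* ZMod m) (hφ : Set.MapsTo φ A B)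
    (h : HasWZSSub A S) : HasWZSSub B (φ ∘ S) := by
  obtain ⟨I, hI, a, ha, hsum⟩ := h
  refine ⟨I, hI, φ ∘ a, fun i hi ↦ hφ (ha i hi), ?_⟩
  simpa using congrArg φ hsum

theorem isExtremal_of_not_hasWZSSub (hA : ∀ T : Fin (l + 1) → ZMod n, HasWZSSub A T)
    (hS : ¬ HasWZSSub A S) : IsExtremal n A S := by
  have hmem : l + 1 ∈ {k | 0 < k ∧ ∀ T : Fin k → ZMod n, HasWZSSub A T} := ⟨l.succ_pos, hA⟩
  have hle : DavW n A ≤ l + 1 := Nat.sInf_le hmem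
  have hlt : l < DavW n A := by
    by_contra! hDl
    exact hS (((Nat.sInf_mem ⟨_, hmem⟩).2 _).of_comp_embedding (Fin.castLEEmb hDl))
  exact ⟨by lia, hS⟩

theorem HasWZSSub.of_equivWrt {H : Subgroup (ZMod n)ˣ} {T : Fin l → ZMod n}
    (hST : EquivWrt (H.ofUnits : Set (ZMod n)) S T) (h : HasWZSSub (H.ofUnits : Set (ZMod n)) S) :
    HasWZSSub (H.ofUnits : Set (ZMod n)) T := by
  obtain ⟨a, c, σ, ha, hT⟩ := hST
  obtain ⟨I, hI, w, hw, hsum⟩ := h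
  choose α hαH hα using ha
  replace hα : ∀ i, (α i : ZMod n) = a i := hα
  refine ⟨I.map σ.toEmbedding, hI.map, fun j ↦ w (σ.symm j) * ↑(α (σ.symm j))⁻¹, ?_, ?_⟩
  · intro j hj
    exact mul_mem (hw _ (by simpa using hj)) (H.mem_ofUnits (H.inv_mem (hαH _)) rfl)
  · calc ∑ j ∈ I.map σ.toEmbedding, w (σ.symm j) * ↑(α (σ.symm j))⁻¹ * T j
        = ∑ i ∈ I, c * (w i * S i) := by
          rw [sum_map]
          refine sum_congr rfl fun i _ ↦ ?_
          simp only [Equiv.coe_toEmbedding, Equiv.symm_apply_apply, hT, ← hα]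
          linear_combination (w i * c * S i) * (α i).inv_mul
      _ = 0 := by rw [← mul_sum, hsum, mul_zero]

theorem HasWZSSub.tail {p : ℕ} [Fact p.Prime] [NeZero n] (hpn : p ∣ n) (hA : A ⊆ USet n)
    {y : Fin (l + 1) → ZMod n} (hy₀ : ¬ p ∣ (y 0).val) (hy : ∀ i : Fin l, p ∣ (y i.succ).val)
    (h : HasWZSSub A y) : HasWZSSub A (Fin.tail y) := by
  obtain ⟨I, hI, a, ha, hsum⟩ := h
  let φ := ZMod.castHom hpn (ZMod p)
  have hφ (z : ZMod n) : φ z = 0 ↔ p ∣ z.val := by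
    rw [ZMod.castHom_apply, ZMod.cast_eq_val, ZMod.natCast_eq_zero_iff]
  have h0 : 0 ∉ I := fun h0 ↦ by
    have hφ0 : φ (a 0) * φ (y 0) = 0 := by
      rw [← map_mul, ← map_zero φ, ← hsum, map_sum, sum_eq_single_of_mem 0 h0]
      intro i _ hi
      obtain ⟨j, rfl⟩ := Fin.exists_succ_eq.2 hi
      rw [map_mul, (hφ _).2 (hy j), mul_zero]
    exact hy₀ ((hφ _).1 ((((hA (ha 0 h0)).map φ).mul_right_eq_zero).1 hφ0))
  have hrange : ∀ i ∈ I, i ∈ Set.range (Fin.succ : Fin l → Fin (l + 1)) := fun i hi ↦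
    Fin.exists_succ_eq.2 (ne_of_mem_of_not_mem hi h0)
  refine ⟨I.preimage Fin.succ (Fin.succ_injective l).injOn, ?_, Fin.tail a,
    fun i hi ↦ ha _ (mem_preimage.1 hi), ?_⟩
  · obtain ⟨i, hi⟩ := hI
    obtain ⟨j, rfl⟩ := hrange i hi
    exact ⟨j, mem_preimage.2 hi⟩
  · rw [← hsum]
    exact sum_preimage _ _ _ (fun i ↦ a i * y i) fun i hi hi' ↦ absurd (hrange i hi) hi'

theorem not_hasWZSSub_pair [Nontrivial (ZMod n)] {H : Subgroup (ZMod n)ˣ} {y : Fin 2 → ZMod n}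
    (hy₀ : y 0 ∈ H.ofUnits) (hy₁ : IsUnit (-y 1)) (hy₁' : -y 1 ∉ H.ofUnits) :
    ¬ HasWZSSub (H.ofUnits : Set (ZMod n)) y := by
  rintro ⟨I, hI, a, ha, hsum⟩
  have hunit : ∀ i, IsUnit (y i) :=
    Fin.forall_fin_two.2 ⟨H.isUnit_of_mem_ofUnits hy₀, by simpa using hy₁⟩
  have hI1 : #I ≠ 1 := fun h ↦ by
    obtain ⟨i, rfl⟩ := card_eq_one.1 h
    rw [sum_singleton] at hsum
    exact ((H.isUnit_of_mem_ofUnits (ha i (by simp))).mul (hunit i)).ne_zero hsum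
  obtain rfl : I = univ := eq_univ_of_card I <| by
    have := card_finset_fin_le I
    have := hI.card_pos
    rw [Fintype.card_fin]
    lia
  rw [Fin.sum_univ_two] at hsum
  obtain ⟨u, hu, (hua : (u : ZMod n) = a 1)⟩ := ha 1 (mem_univ 1)
  have hy₁_eq : -y 1 = ↑u⁻¹ * (a 0 * y 0) := by
    rw [Units.eq_inv_mul_iff_mul_eq, hua]
    linear_combination -hsum
  rw [hy₁_eq] at hy₁'
  exact hy₁' (mul_mem (H.mem_ofUnits (H.inv_mem hu) rfl) (mul_mem (ha 0 (mem_univ 0)) hy₀))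

end ZeroSumSubsequences

theorem isExtremal_JSet_of_equivWrt {n k : ℕ} {S y : Fin k → ZMod n} (hn : Squarefree n)
    (hp : ∀ p, p.Prime → p ∣ n → 5 < p) (hk : k = n.primeFactorsList.length) (hk2 : 2 ≤ k)
    (hSy : EquivWrt (JSet n) S y) (hy : ¬ HasWZSSub (JSet n) y) : IsExtremal n (JSet n) S := by
  have hcard : n.primeFactors.card = k := by
    rw [hk, Nat.primeFactors, List.toFinset_card_of_nodup]
    exact (Nat.squarefree_iff_nodup_primeFactorsList hn.ne_zero).1 hn
  refine isExtremal_of_not_hasWZSSub (hasWZSSub_JSet hn hp (by lia) (by lia)) fun hS ↦ hy ?_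
  rw [JSet_eq_ofUnits_jacobiKer] at hSy hS ⊢
  exact hS.of_equivWrt hSy

theorem extremal_S_sufficient (n : ℕ) (hodd : Odd n) (hsf : Squarefree n)
    (hp7 : ∀ p : ℕ, p.Prime → p ∣ n → 7 ≤ p)
    (k : ℕ) (hk : k = (Nat.primeFactorsList n).length) (hk2 : 2 ≤ k)
    (S : Fin k → ZMod n) :
    ((∃ y : Fin k → ZMod n, EquivWrt (JSet n) S y ∧
        ∃ p : ℕ, ∃ hp : p.Prime ∧ p ∣ n,
          ¬ p ∣ (y ⟨0, by omega⟩).val ∧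
          (∀ i : Fin k, i.val ≠ 0 → p ∣ (y i).val) ∧
          IsExtremal (n / p) (USet (n / p))
            (fun i : Fin (k - 1) =>
              ZMod.castHom (Nat.div_dvd_of_dvd hp.2) (ZMod (n / p))
                (y ⟨i.val + 1, by have := i.isLt; omega⟩))) →
      IsExtremal n (JSet n) S) ∧
    ((k = 2 ∧ ∃ y : Fin k → ZMod n, EquivWrt (JSet n) S y ∧
        y ⟨0, by omega⟩ ∈ JSet n ∧
        IsUnit (-(y ⟨1, by omega⟩)) ∧ (-(y ⟨1, by omega⟩)) ∉ JSet n) →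
      IsExtremal n (JSet n) S) := by
  have hp5 : ∀ p, p.Prime → p ∣ n → 5 < p := fun p hp hpn ↦ by have := hp7 p hp hpn; lia
  have : NeZero n := ⟨hsf.ne_zero⟩
  constructor
  · rintro ⟨y, hSy, p, ⟨hp, hpn⟩, hy₀, hy, -, hT⟩
    refine isExtremal_JSet_of_equivWrt hsf hp5 hk hk2 hSy fun hW ↦ hT ?_
    obtain ⟨l, rfl⟩ : ∃ l, k = l + 1 := ⟨k - 1, by lia⟩
    have : Fact p.Prime := ⟨hp⟩
    exact (hW.tail hpn (fun _ h ↦ h.1) hy₀ fun i ↦ hy i.succ i.val.succ_ne_zero).map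
      (ZMod.castHom (Nat.div_dvd_of_dvd hpn) (ZMod (n / p))) fun _ h ↦ h.1.map _
  · rintro ⟨rfl, y, hSy, hy₀, hy₁, hy₁'⟩
    have : Nontrivial (ZMod n) := ZMod.nontrivial_iff.2 (by rintro rfl; simp at hk)
    refine isExtremal_JSet_of_equivWrt hsf hp5 hk hk2 hSy ?_
    rw [JSet_eq_ofUnits_jacobiKer] at hy₀ hy₁' ⊢
    exact not_hasWZSSub_pair hy₀ hy₁ hy₁'
end
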